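/- arXiv:0911.5086 — 2 statements merged into one kernel-verified Lean document; each statement's English description precedes it below -/
import Mathlib

section
/- Fix an odd integer d ≥ 3 and an integer m ≥ 2. There exists a constant c > 0, depending only on d and m, with the following property: for any m parallel hyperplanes Π_1, …, Π_m in E^{d+1} and finite sets P_i ⊂ Π_i such that each 𝒫_i = conv(P_i) is a d-dimensional polytope with n_i vertices, the total number of nonempty exposed faces of 𝒫 = conv(P_1 ∪ … ∪ P_m) is at most c · Σ_{1 ≤ i ≠ j ≤ m} n_i · n_j^{⌊d/2⌋}. (Upper bound part of Theorem 2.6.) -/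
/-!
Let `Π` be the hyperplane carrying the most vertices, `N` the number of all vertices and `O` the set
of vertices outside `Π`. In dimension at most `2 * (k + 1)` the number of faces is at most a
constant times `|O| * N ^ k`, and this suffices because `N` is at most `m` times the number of
vertices on `Π`.

By polarity, the proper faces become the sets of constraints tight at the points of a polyhedron.
After a generic perturbation of the right-hand sides, the constraints tight at a vertex of the
polyhedron form a basis, and every face is spanned by a part of such a basis. Expand a generic
vector `c` in these bases. The vertex minimizes `c` over the face of the polyhedron cut out by the
constraints with positive coefficient, and it is the only vertex doing so, hence the basis is
determined by these constraints alone; likewise by those with negative coefficient. If a basis meets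
`O`, then one of these two halves has at most `k` elements, or both have `k + 1` elements and one of
them meets `O`. This leaves at most a constant times `|O| * N ^ k` bases that can span a face not
contained in `Π`. Finally, the hyperplane supporting a face contained in `Π` can be rotated about its
intersection with `Π` until it touches a vertex outside `Π`.
-/

open Set Pointwise RealInnerProductSpace

/-- The dimension of the affine hull of a set. -/
noncomputable def adim {N : ℕ} (F : Set (EuclideanSpace ℝ (Fin N))) : ℕ :=
  Module.finrank ℝ (vectorSpan ℝ F)

/-- The combinatorial complexity of `C`: the number of nonempty exposed faces of `C`. -/
noncomputable def totalFaces {N : ℕ} (C : Set (EuclideanSpace ℝ (Fin N))) : ℕ :=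
  {F : Set (EuclideanSpace ℝ (Fin N)) | IsExposed ℝ C F ∧ F.Nonempty}.ncard

/-! ### Splitting by signs -/

section SignHalves

variable {M ι : Type*} [Zero M] [LinearOrder M]

/-- The sets of indices at which `r` is positive and negative. -/
def signHalves (r : ι →₀ M) : Finset ι × Finset ι :=
  (r.support.filter (0 < r ·), r.support.filter (r · < 0))

theorem mem_signHalves_fst {r : ι →₀ M} {p : ι} : p ∈ (signHalves r).1 ↔ 0 < r p := by
  simpa [signHalves] using ne_of_gt

theorem mem_signHalves_snd {r : ι →₀ M} {p : ι} : p ∈ (signHalves r).2 ↔ r p < 0 := by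
  simpa [signHalves] using ne_of_lt

theorem coe_signHalves_union (r : ι →₀ M) :
    (↑(signHalves r).1 ∪ ↑(signHalves r).2 : Set ι) = r.support := by
  ext p
  rw [mem_union, Finset.mem_coe, Finset.mem_coe, mem_signHalves_fst, mem_signHalves_snd,
    Finset.mem_coe, Finsupp.mem_support_iff, ne_iff_lt_or_gt, or_comm]

theorem card_signHalves_add (r : ι →₀ M) :
    (signHalves r).1.card + (signHalves r).2.card = r.support.card := by
  classical
  have hunion : (signHalves r).1 ∪ (signHalves r).2 = r.support := by
    exact_mod_cast coe_signHalves_union r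
  have hdisj : Disjoint (signHalves r).1 (signHalves r).2 :=
    Finset.disjoint_left.2 fun p hp hp' =>
      (mem_signHalves_fst.1 hp).asymm (mem_signHalves_snd.1 hp')
  rw [← hunion, Finset.card_union_of_disjoint hdisj]

theorem signHalves_neg {G : Type*} [AddCommGroup G] [LinearOrder G] [IsOrderedAddMonoid G]
    (r : ι →₀ G) : signHalves (-r) = (signHalves r).swap := by
  refine Prod.ext (Finset.ext fun p => ?_) (Finset.ext fun p => ?_)
  · simp [mem_signHalves_fst, mem_signHalves_snd]
  · simp [mem_signHalves_fst, mem_signHalves_snd]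

end SignHalves

/-! ### General position -/

section GeneralPosition

variable {K V ι : Type*} [Field K] [AddCommGroup V] [Module K V]

/-- The indices of the constraints `y (v p) ≤ b p` which hold with equality at `y`. -/
def tightSet (v : ι → V) (b : ι → K) (y : Module.Dual K V) : Set ι :=
  {p | y (v p) = b p}

/-- The constraints `y (v p) ≤ b p` are in general position: any of them that hold with equality
at a common point have linearly independent normals `v p`. -/
def IsNondegenerate (v : ι → V) (b : ι → K) : Prop :=
  ∀ y : Module.Dual K V, LinearIndepOn K v (tightSet v b y)

theorem exists_mem_span_forall_notMem_span [Infinite K] [Finite ι] (v : ι → V) :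
    ∃ c ∈ Submodule.span K (range v), ∀ (A : Set ι) (p : ι),
      v p ∉ Submodule.span K (v '' A) → c ∉ Submodule.span K (v '' A) := by
  let 𝒜 := {A : Set ι // ∃ p, v p ∉ Submodule.span K (v '' A)}
  have hf (A : 𝒜) : ∃ f : Module.Dual K V, (∃ p, f (v p) ≠ 0) ∧
      Submodule.span K (v '' A.1) ≤ LinearMap.ker f := by
    obtain ⟨p, hp⟩ := A.2
    obtain ⟨f, hfp, hf⟩ := Submodule.exists_le_ker_of_notMem hp
    exact ⟨f, ⟨p, hfp⟩, hf⟩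
  choose f hfv hf using hf
  obtain ⟨c, hc, hfc⟩ := Module.Dual.exists_forall_mem_ne_zero_of_forall_exists
    (Submodule.span K (range v)) f fun A => by
      obtain ⟨p, hp⟩ := hfv A
      exact ⟨v p, Submodule.subset_span (mem_range_self p), hp⟩
  exact ⟨c, hc, fun A p hp hcA => hfc ⟨A, p, hp⟩ (hf ⟨A, p, hp⟩ hcA)⟩

-- A right-hand side is nondegenerate as soon as it violates one nontrivial relation among the
-- vectors of each dependent subfamily.
theorem exists_isNondegenerate [Infinite K] [Finite ι] (v : ι → V) :
    ∃ w : ι → K, IsNondegenerate v w := by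
  have hr (A : {A : Set ι // ¬ LinearIndepOn K v A}) := linearDepOn_iff'.1 A.2
  choose r hrA hrv hr₀ using hr
  obtain ⟨f, hf⟩ := Module.exists_dual_forall_apply_ne_zero (K := K) r hr₀
  refine ⟨fun p => f (Finsupp.single p 1), fun y => ?_⟩
  by_contra hA
  have hfy : f (r ⟨_, hA⟩) = y (Finsupp.linearCombination K v (r ⟨_, hA⟩)) := by
    have hmem := hrA ⟨_, hA⟩
    rw [Finsupp.supported_eq_span_single] at hmem
    refine LinearMap.eqOn_span (g := y ∘ₗ Finsupp.linearCombination K v) ?_ hmem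
    rintro _ ⟨p, hp, rfl⟩
    simpa using Eq.symm hp
  exact hf ⟨_, hA⟩ (by rw [hfy, hrv, map_zero])

theorem IsNondegenerate.finite_not_smul_add [Finite ι] {v : ι → V} {w : ι → K}
    (hw : IsNondegenerate v w) (b : ι → K) :
    {s : K | ¬ IsNondegenerate v (s • b + w)}.Finite := by
  let solvable (A : Set ι) : Set K := {s | ∃ y : Module.Dual K V, A = tightSet v (s • b + w) y}
  have hsub (A : Set ι) (hA : ¬ LinearIndepOn K v A) : (solvable A).Subsingleton := by
    rintro s ⟨y, hy⟩ t ⟨z, hz⟩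
    by_contra hst
    refine hA ((hw ((t - s)⁻¹ • (t • y - s • z))).mono fun p hp => ?_)
    have hyp : y (v p) = s * b p + w p := hy.subset hp
    have hzp : z (v p) = t * b p + w p := hz.subset hp
    have hts : t - s ≠ 0 := sub_ne_zero.2 (Ne.symm hst)
    change (t - s)⁻¹ * (t * y (v p) - s * z (v p)) = w p
    rw [hyp, hzp]
    field_simp
    ring
  refine (finite_iUnion fun A : {A : Set ι // ¬ LinearIndepOn K v A} =>
    (hsub A A.2).finite).subset fun s hs => ?_
  obtain ⟨y, hy⟩ := not_forall.1 hs
  exact mem_iUnion.2 ⟨⟨_, hy⟩, y, rfl⟩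

theorem exists_linearCombination_support_eq {v : ι → V} {A : Set ι} {c : V}
    (hc : c ∈ Submodule.span K (v '' A))
    (hgen : ∀ p ∈ A, c ∉ Submodule.span K (v '' (A \ {p}))) :
    ∃ r : ι →₀ K, Finsupp.linearCombination K v r = c ∧ ↑r.support = A := by
  obtain ⟨r, hrA, rfl⟩ := (Finsupp.mem_span_image_iff_linearCombination K).1 hc
  refine ⟨r, rfl, subset_antisymm ((Finsupp.mem_supported K r).1 hrA) fun p hp => ?_⟩
  by_contra hpr
  exact hgen p hp ((Finsupp.mem_span_image_iff_linearCombination K).2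
    ⟨r, (Finsupp.mem_supported K r).2 (subset_sdiff_singleton hrA hpr), rfl⟩)

end GeneralPosition

/-! ### Polyhedra and their generic perturbations -/

section Polyhedron

variable {K V ι : Type*} [Field K] [LinearOrder K] [IsStrictOrderedRing K] [AddCommGroup V]
  [Module K V]

/-- The polyhedron of all functionals `y` satisfying the constraints `y (v p) ≤ b p`. -/
def polyhedron (v : ι → V) (b : ι → K) : Set (Module.Dual K V) :=
  {y | ∀ p, y (v p) ≤ b p}

theorem exists_max_step [Finite ι] {a g : ι → K} (ha : ∀ p, 0 ≤ a p) (hg : ∃ p, 0 < g p) :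
    ∃ s, 0 ≤ s ∧ (∀ p, s * g p ≤ a p) ∧ ∃ q, 0 < g q ∧ s * g q = a q := by
  obtain ⟨q, hq : 0 < g q, hmin⟩ :=
    exists_min_image {p | 0 < g p} (fun p => a p / g p) (toFinite _) hg
  have hs : 0 ≤ a q / g q := div_nonneg (ha q) hq.le
  refine ⟨a q / g q, hs, fun p => ?_, q, hq, div_mul_cancel₀ _ hq.ne'⟩
  rcases lt_or_ge 0 (g p) with hp | hp
  · exact (le_div_iff₀ hp).1 (hmin p hp)
  · exact (mul_nonpos_of_nonneg_of_nonpos hs hp).trans (ha p)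

theorem exists_tightSet_ssubset [Finite ι] {v : ι → V} {b : ι → K} {y : Module.Dual K V}
    (hy : y ∈ polyhedron v b) {p₀ : ι} (hp₀ : v p₀ ∉ Submodule.span K (v '' tightSet v b y)) :
    ∃ z ∈ polyhedron v b, tightSet v b y ⊂ tightSet v b z := by
  obtain ⟨f, hf₀, hf⟩ := Submodule.exists_le_ker_of_notMem hp₀
  obtain ⟨g, hg₀, hg⟩ : ∃ g : Module.Dual K V,
      0 < g (v p₀) ∧ ∀ p ∈ tightSet v b y, g (v p) = 0 := by
    have hf' : ∀ p ∈ tightSet v b y, f (v p) = 0 := fun p hp =>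
      hf (Submodule.subset_span (mem_image_of_mem v hp))
    rcases lt_or_gt_of_ne hf₀ with h | h
    · exact ⟨-f, neg_pos.2 h, fun p hp => neg_eq_zero.2 (hf' p hp)⟩
    · exact ⟨f, h, hf'⟩
  obtain ⟨s, -, hs, q, hq, hsq⟩ := exists_max_step (a := fun p => b p - y (v p))
    (g := fun p => g (v p)) (fun p => sub_nonneg.2 (hy p)) ⟨p₀, hg₀⟩
  refine ⟨y + s • g, fun p => le_sub_iff_add_le'.1 (hs p), fun p hp => ?_, fun h => ?_⟩
  · change y (v p) + s * g (v p) = b p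
    rw [hg p hp, mul_zero, add_zero, hp]
  · exact hq.ne' (hg q (h (eq_sub_iff_add_eq'.1 hsq)))

theorem exists_spanning_tightSet [Finite ι] {v : ι → V} {b : ι → K} {y : Module.Dual K V}
    (hy : y ∈ polyhedron v b) :
    ∃ z ∈ polyhedron v b, tightSet v b y ⊆ tightSet v b z ∧
      ∀ p, v p ∈ Submodule.span K (v '' tightSet v b z) := by
  obtain ⟨_, hyz, ⟨⟨z, hz, rfl⟩, hmax⟩⟩ :=
    (toFinite (tightSet v b '' polyhedron v b)).exists_le_maximal (mem_image_of_mem _ hy)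
  refine ⟨z, hz, hyz, fun p => ?_⟩
  by_contra hp
  obtain ⟨z', hz', hlt⟩ := exists_tightSet_ssubset hz hp
  exact hlt.not_subset (hmax (mem_image_of_mem _ hz') hlt.subset)

-- The point `z` solves the constraints `w` on the part tight at `y`; far out on the ray in
-- direction `y`, the point `s • y + z` satisfies the remaining constraints strictly.
theorem eventually_exists_polyhedron_smul_add [Finite ι] {v : ι → V} {b : ι → K}
    (hb : ∀ p, 0 < b p) (w : ι → K) {y : Module.Dual K V} (hy : y ∈ polyhedron v b) :
    ∀ᶠ s : K in Filter.atTop, ∃ z ∈ polyhedron v (s • b + w),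
      tightSet v (s • b + w) z ⊆ tightSet v b y ∧
        ∀ p ∈ tightSet v b y, v p ∈ Submodule.span K (v '' tightSet v (s • b + w) z) := by
  let T := tightSet v b y
  obtain ⟨m, hm⟩ : ∃ m : K, ∀ p, m * b p ≤ w p := by
    obtain ⟨m, hm⟩ := (finite_range fun p => w p / b p).bddBelow
    exact ⟨m, fun p => (le_div_iff₀ (hb p)).1 (hm (mem_range_self p))⟩
  have hmy : m • y ∈ polyhedron (fun p : T => v p) (fun p : T => w p) := fun p => by
    change m * y (v p) ≤ w p
    rw [p.2]
    exact hm p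
  obtain ⟨z, hz, -, hspan⟩ := exists_spanning_tightSet hmy
  have hslack (p : ι) (hp : p ∉ T) :
      ∀ᶠ s : K in Filter.atTop, s * y (v p) + z (v p) < s * b p + w p := by
    have hlt : 0 < b p - y (v p) := sub_pos.2 ((hy p).lt_of_ne hp)
    filter_upwards [Filter.eventually_gt_atTop ((z (v p) - w p) / (b p - y (v p)))] with s hs
    rw [div_lt_iff₀ hlt] at hs
    linarith
  filter_upwards [Filter.eventually_all.2 fun p => Filter.eventually_imp_distrib_left.2 (hslack p)]
    with s hs
  have hT (p : ι) (hp : p ∈ T) : (s • y + z) (v p) = s * b p + z (v p) := by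
    change s * y (v p) + z (v p) = _
    rw [hp]
  refine ⟨s • y + z, fun p => ?_, fun p hp => ?_, fun p hp => ?_⟩
  · by_cases hp : p ∈ T
    · rw [hT p hp]
      exact add_le_add_right (hz ⟨p, hp⟩) _
    · exact (hs p hp).le
  · by_contra hpT
    exact (hs p hpT).ne hp
  · refine Submodule.span_mono ?_ (hspan ⟨p, hp⟩)
    rintro _ ⟨q, hq, rfl⟩
    exact ⟨q, (hT q q.2).trans (congrArg _ hq), rfl⟩

theorem exists_nondegenerate_perturbation [Finite ι] (v : ι → V) {b : ι → K} (hb : ∀ p, 0 < b p) :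
    ∃ b' : ι → K, IsNondegenerate v b' ∧ ∀ y ∈ polyhedron v b, ∃ z ∈ polyhedron v b',
      tightSet v b' z ⊆ tightSet v b y ∧
        ∀ p ∈ tightSet v b y, v p ∈ Submodule.span K (v '' tightSet v b' z) := by
  obtain ⟨w, hw⟩ := exists_isNondegenerate (K := K) v
  have hfaces : ∀ᶠ s : K in Filter.atTop, ∀ T ∈ tightSet v b '' polyhedron v b,
      ∃ z ∈ polyhedron v (s • b + w), tightSet v (s • b + w) z ⊆ T ∧
        ∀ p ∈ T, v p ∈ Submodule.span K (v '' tightSet v (s • b + w) z) := by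
    refine (Filter.eventually_all_finite (toFinite _)).2 ?_
    rintro _ ⟨y, hy, rfl⟩
    exact eventually_exists_polyhedron_smul_add hb w hy
  have hnondeg : ∀ᶠ s : K in Filter.atTop, IsNondegenerate v (s • b + w) := by
    obtain ⟨M, hM⟩ := (hw.finite_not_smul_add b).bddAbove
    filter_upwards [Filter.eventually_gt_atTop M] with s hs
    by_contra h
    exact (hM h).not_gt hs
  obtain ⟨s, hs, hs'⟩ := (hnondeg.and hfaces).exists
  exact ⟨s • b + w, hs, fun y hy => hs' _ (mem_image_of_mem _ hy)⟩

-- If `z` is tight where `r` is positive, then `y` minimizes `∑ r p • v p` among the feasible points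
-- tight there, as `z` can only be larger than `y` where `r` is negative.
theorem mul_apply_le_mul_apply {v : ι → V} {b : ι → K} {r : ι →₀ K} {y z : Module.Dual K V}
    (hy : ↑r.support ⊆ tightSet v b y) (hz : z ∈ polyhedron v b)
    (hpos : ∀ p, 0 < r p → p ∈ tightSet v b z) (p : ι) :
    r p * y (v p) ≤ r p * z (v p) := by
  rcases lt_trichotomy (r p) 0 with hr | hr | hr
  · rw [show y (v p) = b p from hy (Finsupp.mem_support_iff.2 hr.ne)]
    exact mul_le_mul_of_nonpos_left (hz p) hr.le
  · rw [hr, zero_mul, zero_mul]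
  · rw [show y (v p) = b p from hy (Finsupp.mem_support_iff.2 hr.ne'),
      show z (v p) = b p from hpos p hr]

theorem apply_linearCombination_le {v : ι → V} {b : ι → K} {r : ι →₀ K} {y z : Module.Dual K V}
    (hy : ↑r.support ⊆ tightSet v b y) (hz : z ∈ polyhedron v b)
    (hpos : ∀ p, 0 < r p → p ∈ tightSet v b z) :
    y (Finsupp.linearCombination K v r) ≤ z (Finsupp.linearCombination K v r) := by
  simp only [Finsupp.linearCombination_apply, Finsupp.sum, map_sum, map_smul, smul_eq_mul]
  exact Finset.sum_le_sum fun p _ => mul_apply_le_mul_apply hy hz hpos p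

theorem support_subset_tightSet_of_apply_le {v : ι → V} {b : ι → K} {r : ι →₀ K}
    {y z : Module.Dual K V} (hy : ↑r.support ⊆ tightSet v b y) (hz : z ∈ polyhedron v b)
    (hpos : ∀ p, 0 < r p → p ∈ tightSet v b z)
    (hle : z (Finsupp.linearCombination K v r) ≤ y (Finsupp.linearCombination K v r)) :
    ↑r.support ⊆ tightSet v b z := by
  intro p hp
  have hterm := mul_apply_le_mul_apply hy hz hpos
  have hsum := (apply_linearCombination_le hy hz hpos).antisymm hle
  simp only [Finsupp.linearCombination_apply, Finsupp.sum, map_sum, map_smul, smul_eq_mul] at hsum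
  have heq := (Finset.sum_eq_sum_iff_of_le fun p _ => hterm p).1 hsum p hp
  exact (mul_left_cancel₀ (Finsupp.mem_support_iff.1 hp) heq).symm.trans (hy hp)

theorem support_eq_of_pos_iff_pos {v : ι → V} {b : ι → K} {r₁ r₂ : ι →₀ K}
    {y₁ y₂ : Module.Dual K V} (hy₁ : y₁ ∈ polyhedron v b) (hy₂ : y₂ ∈ polyhedron v b)
    (h₁ : ↑r₁.support = tightSet v b y₁) (h₂ : ↑r₂.support = tightSet v b y₂)
    (hr : Finsupp.linearCombination K v r₁ = Finsupp.linearCombination K v r₂)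
    (hpos : ∀ p, 0 < r₁ p ↔ 0 < r₂ p) : r₁.support = r₂.support := by
  have hpos₁ : ∀ p, 0 < r₁ p → p ∈ tightSet v b y₂ := fun p hp =>
    h₂ ▸ Finsupp.mem_support_iff.2 ((hpos p).1 hp).ne'
  have hpos₂ : ∀ p, 0 < r₂ p → p ∈ tightSet v b y₁ := fun p hp =>
    h₁ ▸ Finsupp.mem_support_iff.2 ((hpos p).2 hp).ne'
  refine Finset.Subset.antisymm (Finset.coe_subset.1 ?_) (Finset.coe_subset.1 ?_)
  · rw [h₂]
    refine support_subset_tightSet_of_apply_le h₁.subset hy₂ hpos₁ ?_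
    rw [hr]
    exact apply_linearCombination_le h₂.subset hy₁ hpos₂
  · rw [h₁]
    refine support_subset_tightSet_of_apply_le h₂.subset hy₁ hpos₂ ?_
    rw [← hr]
    exact apply_linearCombination_le h₁.subset hy₂ hpos₁

/-- The expansions `∑ r p • v p = c` in the sets of constraints tight at some point of the
polyhedron. For nondegenerate constraints and generic `c` they correspond to its vertices. -/
def basisExpansions (v : ι → V) (b : ι → K) (c : V) : Set (ι →₀ K) :=
  {r | Finsupp.linearCombination K v r = c ∧ ∃ y ∈ polyhedron v b, ↑r.support = tightSet v b y}

theorem injOn_fst_signHalves (v : ι → V) (b : ι → K) (c : V) :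
    InjOn Prod.fst (signHalves '' basisExpansions v b c) := by
  rintro _ ⟨r₁, ⟨hr₁, y₁, hy₁, h₁⟩, rfl⟩ _ ⟨r₂, ⟨hr₂, y₂, hy₂, h₂⟩, rfl⟩ h
  have hpos (p : ι) : 0 < r₁ p ↔ 0 < r₂ p := by
    rw [← mem_signHalves_fst, h, mem_signHalves_fst]
  have hsupp := support_eq_of_pos_iff_pos hy₁ hy₂ h₁ h₂ (hr₁.trans hr₂.symm) hpos
  have hne (p : ι) : r₁ p ≠ 0 ↔ r₂ p ≠ 0 := by
    rw [← Finsupp.mem_support_iff, hsupp, Finsupp.mem_support_iff]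
  refine Prod.ext h (Finset.ext fun p => ?_)
  rw [mem_signHalves_snd, mem_signHalves_snd]
  grind

theorem injOn_snd_signHalves (v : ι → V) (b : ι → K) (c : V) :
    InjOn Prod.snd (signHalves '' basisExpansions v b c) := by
  have hneg {r : ι →₀ K} (hr : r ∈ basisExpansions v b c) : -r ∈ basisExpansions v b (-c) := by
    obtain ⟨rfl, y, hy, hry⟩ := hr
    exact ⟨map_neg _ r, y, hy, by rwa [Finsupp.support_neg]⟩
  rintro _ ⟨r₁, hr₁, rfl⟩ _ ⟨r₂, hr₂, rfl⟩ h
  refine Prod.swap_injective ?_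
  rw [← signHalves_neg, ← signHalves_neg]
  refine injOn_fst_signHalves v b (-c) (mem_image_of_mem _ (hneg hr₁))
    (mem_image_of_mem _ (hneg hr₂)) ?_
  rwa [signHalves_neg, signHalves_neg, Prod.fst_swap, Prod.fst_swap]

theorem exists_splitBases_polyhedron [Finite ι] [FiniteDimensional K V] (v : ι → V) {b : ι → K}
    (hb : ∀ p, 0 < b p) :
    ∃ 𝓑 : Set (Finset ι × Finset ι), InjOn Prod.fst 𝓑 ∧ InjOn Prod.snd 𝓑 ∧
      (∀ B ∈ 𝓑, B.1.card + B.2.card ≤ Module.finrank K V) ∧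
      ∀ y ∈ polyhedron v b, ∃ B ∈ 𝓑, ∀ p ∈ tightSet v b y,
        v p ∈ Submodule.span K (v '' ((↑B.1 ∪ ↑B.2) ∩ tightSet v b y)) := by
  obtain ⟨b', hb', hpert⟩ := exists_nondegenerate_perturbation v hb
  obtain ⟨c, hc, hgen⟩ := exists_mem_span_forall_notMem_span (K := K) v
  refine ⟨signHalves '' basisExpansions v b' c, injOn_fst_signHalves v b' c,
    injOn_snd_signHalves v b' c, ?_, fun y hy => ?_⟩
  · rintro _ ⟨r, ⟨-, y, -, hr⟩, rfl⟩
    have hr' : LinearIndepOn K v (r.support : Set ι) := hr ▸ hb' y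
    rw [card_signHalves_add]
    simpa using hr'.linearIndependent.fintype_card_le_finrank
  · obtain ⟨z', hz', hsub, hspan'⟩ := hpert y hy
    obtain ⟨z, hz, hzz, hspan⟩ := exists_spanning_tightSet hz'
    obtain ⟨r, hrc, hr⟩ := exists_linearCombination_support_eq (K := K)
      (Submodule.span_le.2 (range_subset_iff.2 hspan) hc)
      fun p hp => hgen _ p ((hb' z).notMem_span hp)
    refine ⟨signHalves r, mem_image_of_mem _ ⟨hrc, z, hz, hr⟩, fun p hp => ?_⟩
    rw [coe_signHalves_union, hr]
    exact Submodule.span_mono (image_mono (subset_inter hzz hsub)) (hspan' p hp)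

end Polyhedron

/-! ### Counting pairs of halves -/

section Counting

variable {ι : Type*} [Finite ι]

theorem ncard_setOf_card_le_le [Nonempty ι] (j : ℕ) :
    {A : Finset ι | A.card ≤ j}.ncard ≤ (j + 1) * Nat.card ι ^ j := by
  have hcover : {A : Finset ι | A.card ≤ j} ⊆ ⋃ i : Fin (j + 1), powersetCard ι i := fun A hA =>
    mem_iUnion.2 ⟨⟨A.card, Nat.lt_succ_of_le hA⟩, rfl⟩
  calc {A : Finset ι | A.card ≤ j}.ncard
      ≤ ∑ i : Fin (j + 1), (powersetCard ι i).ncard :=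
        (ncard_le_ncard hcover (toFinite _)).trans (ncard_iUnion_le_of_fintype _)
    _ ≤ ∑ _i : Fin (j + 1), Nat.card ι ^ j := by
        refine Finset.sum_le_sum fun i _ => ?_
        rw [← Nat.card_coe_set_eq, powersetCard.card]
        exact (Nat.choose_le_pow _ _).trans
          (Nat.pow_le_pow_right Nat.card_pos (Nat.le_of_lt_succ i.2))
    _ = (j + 1) * Nat.card ι ^ j := by simp

theorem ncard_setOf_card_le_or_meets_le {O : Set ι} (hO : O.Nonempty) (j : ℕ) :
    {A : Finset ι | A.card ≤ j ∨ A.card ≤ j + 1 ∧ (↑A ∩ O).Nonempty}.ncard ≤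
      2 * (j + 1) * (O.ncard * Nat.card ι ^ j) := by
  classical
  have : Nonempty ι := hO.to_subtype.map Subtype.val
  let small := {A : Finset ι | A.card ≤ j}
  have hcover : {A : Finset ι | A.card ≤ j ∨ A.card ≤ j + 1 ∧ (↑A ∩ O).Nonempty} ⊆
      small ∪ image2 insert O small := by
    rintro A (hA | ⟨hA, q, hqA, hqO⟩)
    · exact Or.inl hA
    · refine Or.inr ⟨q, hqO, A.erase q, ?_, Finset.insert_erase hqA⟩
      change (A.erase q).card ≤ j
      rw [Finset.card_erase_of_mem hqA]
      exact Nat.sub_le_of_le_add hA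
  have hmeet : (image2 insert O small).ncard ≤ O.ncard * small.ncard := by
    rw [← image_prod, ← ncard_prod]
    exact ncard_image_le (toFinite _)
  calc _ ≤ small.ncard + O.ncard * small.ncard :=
        (ncard_le_ncard hcover (toFinite _)).trans ((ncard_union_le _ _).trans (by gcongr))
    _ ≤ O.ncard * small.ncard + O.ncard * small.ncard := by
        gcongr
        exact Nat.le_mul_of_pos_left _ ((ncard_pos (toFinite _)).2 hO)
    _ = 2 * O.ncard * small.ncard := by ring
    _ ≤ 2 * O.ncard * ((j + 1) * Nat.card ι ^ j) := by
        gcongr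
        exact ncard_setOf_card_le_le j
    _ = _ := by ring

-- One of the halves has at most `j` elements, or both have `j + 1` and one of them meets `O`.
theorem ncard_le_of_injOn_fst_of_injOn_snd {𝓑 : Set (Finset ι × Finset ι)} {O : Set ι} {j : ℕ}
    (hfst : InjOn Prod.fst 𝓑) (hsnd : InjOn Prod.snd 𝓑)
    (hcard : ∀ B ∈ 𝓑, B.1.card + B.2.card ≤ 2 * (j + 1))
    (hO : ∀ B ∈ 𝓑, ((↑B.1 ∪ ↑B.2) ∩ O).Nonempty) :
    𝓑.ncard ≤ 4 * (j + 1) * (O.ncard * Nat.card ι ^ j) := by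
  rcases 𝓑.eq_empty_or_nonempty with rfl | ⟨B₀, hB₀⟩
  · simp
  let 𝒜 := {A : Finset ι | A.card ≤ j ∨ A.card ≤ j + 1 ∧ (↑A ∩ O).Nonempty}
  have h𝒜 : 𝒜.ncard ≤ 2 * (j + 1) * (O.ncard * Nat.card ι ^ j) :=
    ncard_setOf_card_le_or_meets_le (hO B₀ hB₀).right j
  have hcover : 𝓑 ⊆ {B ∈ 𝓑 | B.1 ∈ 𝒜} ∪ {B ∈ 𝓑 | B.2 ∈ 𝒜} := by
    intro B hB
    have hB' : B.1 ∈ 𝒜 ∨ B.2 ∈ 𝒜 := by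
      have := hcard B hB
      obtain ⟨q, hq | hq, hqO⟩ := hO B hB
      · by_cases h : B.2.card ≤ j
        · exact Or.inr (Or.inl h)
        · exact Or.inl (Or.inr ⟨by lia, q, hq, hqO⟩)
      · by_cases h : B.1.card ≤ j
        · exact Or.inl (Or.inl h)
        · exact Or.inr (Or.inr ⟨by lia, q, hq, hqO⟩)
    exact hB'.imp (fun h => ⟨hB, h⟩) fun h => ⟨hB, h⟩
  have h₁ : {B ∈ 𝓑 | B.1 ∈ 𝒜}.ncard ≤ 𝒜.ncard :=
    ncard_le_ncard_of_injOn Prod.fst (fun B hB => hB.2) (hfst.mono fun B hB => hB.1) (toFinite _)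
  have h₂ : {B ∈ 𝓑 | B.2 ∈ 𝒜}.ncard ≤ 𝒜.ncard :=
    ncard_le_ncard_of_injOn Prod.snd (fun B hB => hB.2) (hsnd.mono fun B hB => hB.1) (toFinite _)
  have := (ncard_le_ncard hcover (toFinite _)).trans (ncard_union_le _ _)
  linarith

end Counting

/-! ### Faces of point configurations -/

section AffineSpan

variable {K V : Type*} [Field K] [AddCommGroup V] [Module K V]

theorem exists_affineMap_eq_one_of_notMem {H : AffineSubspace K V} {x : V} (hx : x ∉ H) :
    ∃ ψ : V →ᵃ[K] K, (∀ q ∈ H, ψ q = 0) ∧ ψ x = 1 := by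
  rcases H.eq_bot_or_nonempty with rfl | ⟨q₀, hq₀⟩
  · exact ⟨AffineMap.const K V 1, fun q hq => (AffineSubspace.notMem_bot K V q hq).elim, rfl⟩
  · obtain ⟨f, hfx, hf⟩ := Submodule.exists_le_ker_of_notMem
      (mt (AffineSubspace.vsub_right_mem_direction_iff_mem hq₀ x).1 hx)
    refine ⟨(f (x -ᵥ q₀))⁻¹ • (f.toAffineMap - AffineMap.const K V (f q₀)), fun q hq => ?_, ?_⟩
    · have : f q - f q₀ = 0 := by
        rw [← map_sub]
        exact hf (AffineSubspace.vsub_mem_direction hq hq₀)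
      simp [this]
    · simpa using inv_mul_cancel₀ hfx

theorem mem_affineSpan_of_sub_mem_span {S : Set V} {e x : V} {y : Module.Dual K V}
    (hS : ∀ q ∈ S, y (q - e) = 1) (hx : y (x - e) = 1)
    (hspan : x - e ∈ Submodule.span K ((· - e) '' S)) : x ∈ affineSpan K S := by
  by_contra hxS
  obtain ⟨ψ, hψS, hψx⟩ := exists_affineMap_eq_one_of_notMem hxS
  have hlin (q : V) : ψ.linear (q - e) = ψ q - ψ e := ψ.linearMap_vsub q e
  have hle : Submodule.span K ((· - e) '' S) ≤ LinearMap.ker (ψ.linear + ψ e • y) := by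
    rw [Submodule.span_le]
    rintro _ ⟨q, hq, rfl⟩
    simp [hlin, hS q hq, hψS q (subset_affineSpan K S hq), -map_sub]
  have : ψ.linear (x - e) + ψ e * y (x - e) = 0 := hle hspan
  rw [hlin, hx, hψx] at this
  simp at this

end AffineSpan

section FaceSets

variable (K : Type*) {V ι : Type*} [Field K] [LinearOrder K] [AddCommGroup V] [Module K V]

/-- `T` is the set of indices of the points of the configuration `x` lying on a face of its convex
hull: the set of points where an affine functional that is nonpositive on the configuration
vanishes. The functional may be constant, so that `∅` and `univ` are included. -/
def IsFaceSet (x : ι → V) (T : Set ι) : Prop :=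
  ∃ φ : V →ᵃ[K] K, (∀ p, φ (x p) ≤ 0) ∧ T = {p | φ (x p) = 0}

variable {K}

theorem IsFaceSet.mem_of_mem_affineSpan {x : ι → V} {T A : Set ι} (hT : IsFaceSet K x T)
    (hA : A ⊆ T) {p : ι} (hp : x p ∈ affineSpan K (x '' A)) : p ∈ T := by
  obtain ⟨φ, -, rfl⟩ := hT
  refine AffineMap.eqOn_affineSpan (g := AffineMap.const K V 0) ?_ hp
  rintro _ ⟨q, hq, rfl⟩
  exact hA hq

theorem ncard_isFaceSet_spanned_le [Finite ι] (x : ι → V) (A : Set ι) :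
    {T | IsFaceSet K x T ∧ ∀ p ∈ T, x p ∈ affineSpan K (x '' (A ∩ T))}.ncard ≤ 2 ^ A.ncard := by
  rw [← ncard_powerset A]
  refine ncard_le_ncard_of_injOn (A ∩ ·) (fun T _ => inter_subset_left) ?_ (toFinite _)
  rintro T₁ ⟨h₁, hs₁⟩ T₂ ⟨h₂, hs₂⟩ (h : A ∩ T₁ = A ∩ T₂)
  refine Subset.antisymm (fun p hp => ?_) fun p hp => ?_
  · exact h₂.mem_of_mem_affineSpan inter_subset_right (h ▸ hs₁ p hp)
  · exact h₁.mem_of_mem_affineSpan inter_subset_right (h ▸ hs₂ p hp)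

variable [IsStrictOrderedRing K]

theorem apply_centroid_lt_zero [Fintype ι] {x : ι → V} {φ : V →ᵃ[K] K} (hφ : ∀ p, φ (x p) ≤ 0)
    (hneg : ∃ p, φ (x p) < 0) : φ (Finset.univ.centroid K x) < 0 := by
  obtain ⟨p₀, hp₀⟩ := hneg
  have hne : (Finset.univ : Finset ι).Nonempty := ⟨p₀, Finset.mem_univ p₀⟩
  have hw := Finset.sum_centroidWeights_eq_one_of_nonempty K _ hne
  have hpos : (0 : K) < (Finset.univ.card : K)⁻¹ := inv_pos.2 (by exact_mod_cast hne.card_pos)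
  rw [Finset.centroid_def, Finset.map_affineCombination _ _ _ hw,
    Finset.affineCombination_eq_linear_combination _ _ _ hw]
  refine Finset.sum_neg' (fun p _ => ?_) ⟨p₀, Finset.mem_univ p₀, ?_⟩
  · exact mul_nonpos_of_nonneg_of_nonpos hpos.le (hφ p)
  · exact mul_neg_of_pos_of_neg hpos hp₀

theorem IsFaceSet.exists_eq_tightSet [Fintype ι] {x : ι → V} {T : Set ι} (hT : IsFaceSet K x T)
    (hne : T ≠ univ) :
    ∃ y ∈ polyhedron (fun p => x p - Finset.univ.centroid K x) (1 : ι → K),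
      T = tightSet (fun p => x p - Finset.univ.centroid K x) 1 y := by
  obtain ⟨φ, hφ, rfl⟩ := hT
  obtain ⟨p₀, hp₀⟩ := (ne_univ_iff_exists_notMem _).1 hne
  have he := apply_centroid_lt_zero hφ ⟨p₀, (hφ p₀).lt_of_ne hp₀⟩
  set e := Finset.univ.centroid K x
  have hval (p : ι) : ((-φ e)⁻¹ • φ.linear) (x p - e) = (φ (x p) - φ e) / -φ e := by
    rw [LinearMap.smul_apply, smul_eq_mul, inv_mul_eq_div, ← vsub_eq_sub (x p) e,
      φ.linearMap_vsub, vsub_eq_sub]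
  refine ⟨(-φ e)⁻¹ • φ.linear, fun p => ?_, ?_⟩
  · rw [hval, Pi.one_apply, div_le_one (neg_pos.2 he)]
    linarith [hφ p]
  · ext p
    change φ (x p) = 0 ↔ _ = (1 : K)
    rw [hval, div_eq_one_iff_eq (neg_pos.2 he).ne', sub_eq_neg_self]

-- Polarity with respect to an interior point turns the faces into the sets of constraints tight at
-- points of a polyhedron.
theorem exists_splitBases_isFaceSet [Finite ι] [FiniteDimensional K V] (x : ι → V) :
    ∃ 𝓑 : Set (Finset ι × Finset ι), InjOn Prod.fst 𝓑 ∧ InjOn Prod.snd 𝓑 ∧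
      (∀ B ∈ 𝓑, B.1.card + B.2.card ≤ Module.finrank K V) ∧
      ∀ T, IsFaceSet K x T → T ≠ univ → ∃ B ∈ 𝓑, ∀ p ∈ T,
        x p ∈ affineSpan K (x '' ((↑B.1 ∪ ↑B.2) ∩ T)) := by
  have := Fintype.ofFinite ι
  obtain ⟨𝓑, hfst, hsnd, hcard, hspan⟩ := exists_splitBases_polyhedron
    (fun p => x p - Finset.univ.centroid K x) (b := (1 : ι → K)) fun _ => zero_lt_one
  refine ⟨𝓑, hfst, hsnd, hcard, fun T hT hne => ?_⟩
  obtain ⟨y, hy, rfl⟩ := hT.exists_eq_tightSet hne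
  obtain ⟨B, hB, hBspan⟩ := hspan y hy
  refine ⟨B, hB, fun p hp => mem_affineSpan_of_sub_mem_span ?_ hp ?_⟩
  · rintro _ ⟨q, hq, rfl⟩
    exact hq.2
  · rw [image_image]
    exact hBspan p hp

theorem ncard_isFaceSet_not_subset_le [Finite ι] [FiniteDimensional K V] {j : ℕ}
    (hdim : Module.finrank K V ≤ 2 * (j + 1)) (x : ι → V) (H : AffineSubspace K V) :
    {T | IsFaceSet K x T ∧ T ≠ univ ∧ ¬ T ⊆ x ⁻¹' H}.ncard ≤
      4 ^ (j + 1) * (4 * (j + 1) * ({p | x p ∉ H}.ncard * Nat.card ι ^ j)) := by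
  obtain ⟨𝓑, hfst, hsnd, hcard, hspan⟩ := exists_splitBases_isFaceSet (K := K) x
  let 𝓜 := {B ∈ 𝓑 | ((↑B.1 ∪ ↑B.2) ∩ {p | x p ∉ H}).Nonempty}
  let spanned (B : Finset ι × Finset ι) : Set (Set ι) :=
    {T | IsFaceSet K x T ∧ ∀ p ∈ T, x p ∈ affineSpan K (x '' ((↑B.1 ∪ ↑B.2) ∩ T))}
  have hspanned (B) (hB : B ∈ 𝓜) : (spanned B).ncard ≤ 4 ^ (j + 1) := by
    refine (ncard_isFaceSet_spanned_le x _).trans ?_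
    rw [show 4 = 2 ^ 2 by rfl, ← pow_mul]
    refine Nat.pow_le_pow_right two_pos (((ncard_union_le _ _).trans ?_).trans hdim)
    simpa using hcard B hB.1
  have hcover : {T | IsFaceSet K x T ∧ T ≠ univ ∧ ¬ T ⊆ x ⁻¹' H} ⊆
      ⋃ B ∈ (toFinite 𝓜).toFinset, spanned B := by
    rintro T ⟨hT, hne, hTH⟩
    obtain ⟨B, hB, hBT⟩ := hspan T hT hne
    refine mem_biUnion ((Finite.mem_toFinset _).2 ⟨hB, ?_⟩) ⟨hT, hBT⟩
    by_contra hempty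
    refine hTH fun p hp => affineSpan_le.2 ?_ (hBT p hp)
    rintro _ ⟨q, hq, rfl⟩
    by_contra hqH
    exact hempty ⟨q, hq.1, hqH⟩
  calc _ ≤ ∑ B ∈ (toFinite 𝓜).toFinset, (spanned B).ncard :=
        (ncard_le_ncard hcover (toFinite _)).trans (Finset.set_ncard_biUnion_le _ _)
    _ ≤ ∑ _B ∈ (toFinite 𝓜).toFinset, 4 ^ (j + 1) :=
        Finset.sum_le_sum fun B hB => hspanned B ((Finite.mem_toFinset _).1 hB)
    _ = 4 ^ (j + 1) * 𝓜.ncard := by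
        rw [Finset.sum_const, ← ncard_eq_toFinset_card, smul_eq_mul, mul_comm]
    _ ≤ _ := by
        gcongr
        exact ncard_le_of_injOn_fst_of_injOn_snd (hfst.mono fun B hB => hB.1)
          (hsnd.mono fun B hB => hB.1) (fun B hB => (hcard B hB.1).trans hdim) fun B hB => hB.2

-- Tilt the supporting hyperplane of `T` about its intersection with `H` until it meets a point of
-- the configuration outside `H`.
theorem IsFaceSet.exists_rotate [Finite ι] {x : ι → V} {T : Set ι} {H : AffineSubspace K V}
    (hT : IsFaceSet K x T) (hTH : T ⊂ x ⁻¹' H) (hH : ∃ p, x p ∉ H) :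
    ∃ T', (IsFaceSet K x T' ∧ T' ≠ univ ∧ ¬ T' ⊆ x ⁻¹' H) ∧ T' ∩ x ⁻¹' H = T := by
  obtain ⟨φ, hφ, rfl⟩ := hT
  obtain ⟨p₁, hp₁⟩ := hH
  obtain ⟨ψ, hψ, hψ₁⟩ := exists_affineMap_eq_one_of_notMem hp₁
  obtain ⟨s, -, hs, q, hq, hsq⟩ := exists_max_step (a := fun p => -φ (x p)) (g := fun p => ψ (x p))
    (fun p => neg_nonneg.2 (hφ p)) ⟨p₁, hψ₁ ▸ zero_lt_one⟩
  have happly (p : ι) : (φ + s • ψ) (x p) = φ (x p) + s * ψ (x p) := rfl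
  have hmem (p : ι) (hp : x p ∈ H) : (φ + s • ψ) (x p) = φ (x p) := by
    rw [happly, hψ _ hp, mul_zero, add_zero]
  refine ⟨{p | (φ + s • ψ) (x p) = 0},
    ⟨⟨φ + s • ψ, fun p => ?_, rfl⟩, fun hall => ?_, fun hsub => ?_⟩, ?_⟩
  · rw [happly]
    linarith [hs p]
  · obtain ⟨p, hpH, hp⟩ := exists_of_ssubset hTH
    exact hp ((hmem p hpH).symm.trans (hall.symm.subset (mem_univ p)))
  · have hqT : (φ + s • ψ) (x q) = 0 := by rw [happly, hsq, add_neg_cancel]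
    exact hq.ne' (hψ _ (hsub hqT))
  · ext p
    constructor
    · rintro ⟨hp, hpH⟩
      exact (hmem p hpH).symm.trans hp
    · exact fun hp => ⟨(hmem p (hTH.subset hp)).trans hp, hTH.subset hp⟩

theorem ncard_isFaceSet_le [Finite ι] [FiniteDimensional K V] {j : ℕ}
    (hdim : Module.finrank K V ≤ 2 * (j + 1)) {x : ι → V} {H : AffineSubspace K V}
    (hH : ∃ p, x p ∉ H) :
    {T | IsFaceSet K x T}.ncard ≤
      4 ^ (j + 3) * (j + 1) * ({p | x p ∉ H}.ncard * Nat.card ι ^ j) := by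
  let X := {T | IsFaceSet K x T ∧ T ≠ univ ∧ ¬ T ⊆ x ⁻¹' H}
  have hX := ncard_isFaceSet_not_subset_le hdim x H
  have hcover : {T | IsFaceSet K x T} ⊆ {univ, x ⁻¹' H} ∪ (X ∪ (· ∩ x ⁻¹' H) '' X) := by
    intro T hT
    by_cases huniv : T = univ
    · exact Or.inl (Or.inl huniv)
    by_cases hTH : T ⊆ x ⁻¹' H
    · rcases hTH.eq_or_ssubset with heq | hlt
      · exact Or.inl (Or.inr heq)
      · obtain ⟨T', hT', rfl⟩ := IsFaceSet.exists_rotate hT hlt hH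
        exact Or.inr (Or.inr (mem_image_of_mem _ hT'))
    · exact Or.inr (Or.inl ⟨hT, huniv, hTH⟩)
  have hpos : 0 < 4 ^ (j + 1) * (4 * (j + 1) * ({p | x p ∉ H}.ncard * Nat.card ι ^ j)) := by
    have : Nonempty ι := hH.nonempty
    have : 0 < {p | x p ∉ H}.ncard := (ncard_pos (toFinite _)).2 hH
    have : 0 < Nat.card ι := Nat.card_pos
    positivity
  have hpair : ({univ, x ⁻¹' H} : Set (Set ι)).ncard ≤ 2 :=
    (ncard_insert_le _ _).trans_eq (by rw [ncard_singleton])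
  have hcard : {T | IsFaceSet K x T}.ncard ≤ 2 + (X.ncard + X.ncard) :=
    (ncard_le_ncard hcover (toFinite _)).trans <| (ncard_union_le _ _).trans <|
      Nat.add_le_add hpair <| (ncard_union_le _ _).trans <|
        Nat.add_le_add_left (ncard_image_le (toFinite _)) _
  calc _ ≤ 4 * (4 ^ (j + 1) * (4 * (j + 1) * ({p | x p ∉ H}.ncard * Nat.card ι ^ j))) := by lia
    _ = _ := by ring

end FaceSets

/-! ### Exposed faces of polytopes -/

section ExposedFaces

variable {E : Type*} [AddCommGroup E] [Module ℝ E] [TopologicalSpace E]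

theorem isFaceSet_preimage_of_isExposed {S F : Set E} (hF : IsExposed ℝ (convexHull ℝ S) F)
    (hne : F.Nonempty) : IsFaceSet ℝ (Subtype.val : S → E) (Subtype.val ⁻¹' F) := by
  obtain ⟨l, rfl⟩ := hF hne
  obtain ⟨x₀, hx₀, hmax⟩ := hne
  refine ⟨l.toLinearMap.toAffineMap - AffineMap.const ℝ E (l x₀), fun p => ?_, ?_⟩
  · exact sub_nonpos.2 (hmax p (subset_convexHull ℝ S p.2))
  · ext p
    have hp := subset_convexHull ℝ S p.2
    change (_ ∧ _) ↔ l p - l x₀ = 0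
    rw [sub_eq_zero]
    exact ⟨fun h => (hmax p hp).antisymm (h.2 x₀ hx₀), fun h => ⟨hp, fun y hy => h ▸ hmax y hy⟩⟩

variable [T2Space E] [IsTopologicalAddGroup E] [ContinuousSMul ℝ E] [LocallyConvexSpace ℝ E]

theorem convexHull_extremePoints_of_finite {C : Set E}
    (hC : IsCompact C) (hconv : Convex ℝ C) (hfin : (C.extremePoints ℝ).Finite) :
    convexHull ℝ (C.extremePoints ℝ) = C := by
  rw [← (hfin.isCompact_convexHull ℝ).isClosed.closure_eq]
  exact closure_convexHull_extremePoints hC hconv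

theorem convexHull_extremePoints_convexHull {S : Set E} (hS : S.Finite) :
    convexHull ℝ ((convexHull ℝ S).extremePoints ℝ) = convexHull ℝ S :=
  convexHull_extremePoints_of_finite (hS.isCompact_convexHull ℝ) (convex_convexHull ℝ S)
    (hS.subset extremePoints_convexHull_subset)

theorem convexHull_inter_of_isExposed {S F : Set E} (hS : S.Finite)
    (hF : IsExposed ℝ (convexHull ℝ S) F) : convexHull ℝ (S ∩ F) = F := by
  have hconv := hF.convex (convex_convexHull ℝ S)
  have hext : F.extremePoints ℝ ⊆ S ∩ F := fun x hx =>
    ⟨extremePoints_convexHull_subset (hF.isExtreme.extremePoints_subset_extremePoints hx), hx.1⟩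
  refine (convexHull_min inter_subset_right hconv).antisymm ?_
  calc F = convexHull ℝ (F.extremePoints ℝ) :=
        (convexHull_extremePoints_of_finite (hF.isCompact (hS.isCompact_convexHull ℝ)) hconv
          (hS.subset (hext.trans inter_subset_left))).symm
    _ ⊆ convexHull ℝ (S ∩ F) := convexHull_mono hext

theorem ncard_isExposed_convexHull_le_ncard_isFaceSet {S : Set E}
    (hS : S.Finite) :
    {F | IsExposed ℝ (convexHull ℝ S) F ∧ F.Nonempty}.ncard ≤
      {T | IsFaceSet ℝ (Subtype.val : S → E) T}.ncard := by
  have := hS.to_subtype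
  refine ncard_le_ncard_of_injOn (Subtype.val ⁻¹' ·)
    (fun F hF => isFaceSet_preimage_of_isExposed hF.1 hF.2) ?_ (toFinite _)
  rintro F₁ ⟨h₁, -⟩ F₂ ⟨h₂, -⟩ h
  rw [← convexHull_inter_of_isExposed hS h₁, ← convexHull_inter_of_isExposed hS h₂,
    (Subtype.preimage_val_eq_preimage_val_iff S F₁ F₂).1 h]

theorem ncard_isExposed_convexHull_le [FiniteDimensional ℝ E] {k : ℕ}
    (hdim : Module.finrank ℝ E ≤ 2 * (k + 1)) {S : Set E} (hS : S.Finite) {H : AffineSubspace ℝ E}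
    (hH : ¬ S ⊆ H) :
    {F | IsExposed ℝ (convexHull ℝ S) F ∧ F.Nonempty}.ncard ≤
      4 ^ (k + 3) * (k + 1) * ((S \ H).ncard * S.ncard ^ k) := by
  have := hS.to_subtype
  obtain ⟨x, hxS, hxH⟩ := not_subset.1 hH
  have hoff : {p : S | (p : E) ∉ H}.ncard = (S \ H).ncard := by
    rw [← ncard_image_of_injective _ Subtype.val_injective]
    congr 1
    ext y
    simp [and_comm]
  refine (ncard_isExposed_convexHull_le_ncard_isFaceSet hS).trans ?_
  rw [← hoff, ← Nat.card_coe_set_eq S]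
  exact ncard_isFaceSet_le hdim ⟨⟨x, hxS⟩, hxH⟩

end ExposedFaces

/-! ### Hulls of unions -/

theorem sum_erase_mul_sum_pow_le {ι : Type*} [Fintype ι] [DecidableEq ι] {n : ι → ℕ} {i₀ : ι}
    (hmax : ∀ i, n i ≤ n i₀) (k : ℕ) :
    (∑ i ∈ Finset.univ.erase i₀, n i) * (∑ i, n i) ^ k ≤
      Fintype.card ι ^ k * ∑ i, ∑ j, if i ≠ j then n i * n j ^ k else 0 := by
  have hterm (i : ι) (hi : i ∈ Finset.univ.erase i₀) :
      n i * n i₀ ^ k ≤ ∑ j, if i ≠ j then n i * n j ^ k else 0 :=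
    (if_pos (Finset.ne_of_mem_erase hi)).symm.trans_le
      (Finset.single_le_sum (f := fun j => if i ≠ j then n i * n j ^ k else 0)
        (fun _ _ => Nat.zero_le _) (Finset.mem_univ i₀))
  have hsum : ∑ i, n i ≤ Fintype.card ι * n i₀ := by
    simpa using Finset.sum_le_card_nsmul Finset.univ n (n i₀) fun i _ => hmax i
  calc (∑ i ∈ Finset.univ.erase i₀, n i) * (∑ i, n i) ^ k
      ≤ (∑ i ∈ Finset.univ.erase i₀, n i) * (Fintype.card ι * n i₀) ^ k := by gcongr
    _ = Fintype.card ι ^ k * ∑ i ∈ Finset.univ.erase i₀, n i * n i₀ ^ k := by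
        rw [← Finset.sum_mul]
        ring
    _ ≤ Fintype.card ι ^ k * ∑ i ∈ Finset.univ.erase i₀,
          ∑ j, if i ≠ j then n i * n j ^ k else 0 := by
        gcongr with i hi
        exact hterm i hi
    _ ≤ _ := by
        gcongr
        exact Finset.erase_subset _ _

theorem not_iUnion_subset_affineSpan {K V ι : Type*} [Field K] [AddCommGroup V] [Module K V]
    [Nontrivial ι] {f : V →ᵃ[K] K} {t : ι → K} {P : ι → Set V} (ht : Function.Injective t)
    (hne : ∀ i, (P i).Nonempty) (hP : ∀ i, ∀ x ∈ P i, f x = t i) (i : ι) :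
    ¬ ⋃ j, P j ⊆ (affineSpan K (P i) : Set V) := by
  intro hsub
  obtain ⟨j, hj⟩ := exists_ne i
  obtain ⟨x, hx⟩ := hne j
  have hfx : f x = t i :=
    AffineMap.eqOn_affineSpan (g := AffineMap.const K V (t i)) (hP i)
      (hsub (mem_iUnion.2 ⟨j, hx⟩))
  exact hj (ht ((hP j x hx).symm.trans hfx))

theorem nonempty_of_adim_convexHull_ne_zero {N : ℕ} {S : Set (EuclideanSpace ℝ (Fin N))}
    (h : adim (convexHull ℝ S) ≠ 0) : S.Nonempty := by
  rw [nonempty_iff_ne_empty]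
  rintro rfl
  simp [adim] at h

theorem not_iUnion_subset_affineSpan_of_parallel {N : ℕ} {ι : Type*} [Nontrivial ι]
    {u : EuclideanSpace ℝ (Fin N)} {t : ι → ℝ} {P : ι → Set (EuclideanSpace ℝ (Fin N))}
    (ht : Function.Injective t) (hP : ∀ i, P i ⊆ {x | ⟪x, u⟫ = t i})
    (hadim : ∀ i, adim (convexHull ℝ (P i)) ≠ 0) (i : ι) :
    ¬ ⋃ j, P j ⊆ (affineSpan ℝ (P i) : Set (EuclideanSpace ℝ (Fin N))) :=
  not_iUnion_subset_affineSpan (f := (innerₗ _ u).toAffineMap) ht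
    (fun i => nonempty_of_adim_convexHull_ne_zero (hadim i))
    (fun i x hx => (real_inner_comm x u).trans (hP i hx)) i

theorem ncard_isExposed_convexHull_iUnion_le {E ι : Type*} [NormedAddCommGroup E]
    [NormedSpace ℝ E] [FiniteDimensional ℝ E] [Fintype ι] [DecidableEq ι] {k : ℕ}
    (hdim : Module.finrank ℝ E ≤ 2 * (k + 1)) {Q : ι → Set E} (hfin : ∀ i, (Q i).Finite) {i₀ : ι}
    (hmax : ∀ i, (Q i).ncard ≤ (Q i₀).ncard)
    (hQ : ¬ ⋃ i, Q i ⊆ (affineSpan ℝ (Q i₀) : Set E)) :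
    {F | IsExposed ℝ (convexHull ℝ (⋃ i, Q i)) F ∧ F.Nonempty}.ncard ≤
      4 ^ (k + 3) * (k + 1) * (Fintype.card ι ^ k *
        ∑ i, ∑ j, if i ≠ j then (Q i).ncard * (Q j).ncard ^ k else 0) := by
  have hoff : (⋃ i, Q i) \ affineSpan ℝ (Q i₀) ⊆ ⋃ i ∈ Finset.univ.erase i₀, Q i := by
    rintro x ⟨hx, hx₀⟩
    obtain ⟨i, hi⟩ := mem_iUnion.1 hx
    refine mem_biUnion (Finset.mem_erase.2 ⟨?_, Finset.mem_univ i⟩) hi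
    rintro rfl
    exact hx₀ (subset_affineSpan ℝ _ hi)
  have hoff_card : ((⋃ i, Q i) \ affineSpan ℝ (Q i₀)).ncard ≤
      ∑ i ∈ Finset.univ.erase i₀, (Q i).ncard :=
    (ncard_le_ncard hoff ((finite_iUnion hfin).subset (iUnion₂_subset fun i _ =>
      subset_iUnion Q i))).trans (Finset.set_ncard_biUnion_le _ _)
  refine (ncard_isExposed_convexHull_le hdim (finite_iUnion hfin) hQ).trans ?_
  gcongr 4 ^ (k + 3) * (k + 1) * ?_
  calc _ ≤ (∑ i ∈ Finset.univ.erase i₀, (Q i).ncard) * (∑ i, (Q i).ncard) ^ k := by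
        gcongr
        exact ncard_iUnion_le_of_fintype Q
    _ ≤ _ := sum_erase_mul_sum_pow_le hmax k

theorem stmt0_general {E ι : Type*} [NormedAddCommGroup E] [NormedSpace ℝ E]
    [FiniteDimensional ℝ E] [Fintype ι] [Nonempty ι] [DecidableEq ι] {k : ℕ}
    (hdim : Module.finrank ℝ E ≤ 2 * (k + 1)) {P : ι → Set E} (hfin : ∀ i, (P i).Finite)
    (hP : ∀ i, ¬ ⋃ j, P j ⊆ (affineSpan ℝ (P i) : Set E)) :
    {F | IsExposed ℝ (convexHull ℝ (⋃ i, P i)) F ∧ F.Nonempty}.ncard ≤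
      4 ^ (k + 3) * (k + 1) * Fintype.card ι ^ k * ∑ i, ∑ j,
        if i ≠ j then ((convexHull ℝ (P i)).extremePoints ℝ).ncard *
          ((convexHull ℝ (P j)).extremePoints ℝ).ncard ^ k else 0 := by
  let Q (i : ι) : Set E := (convexHull ℝ (P i)).extremePoints ℝ
  have hQP (i : ι) : Q i ⊆ P i := extremePoints_convexHull_subset
  have hQ (i : ι) : convexHull ℝ (Q i) = convexHull ℝ (P i) :=
    convexHull_extremePoints_convexHull (hfin i)
  have hhull : convexHull ℝ (⋃ i, Q i) = convexHull ℝ (⋃ i, P i) :=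
    (convexHull_mono (iUnion_mono hQP)).antisymm <| convexHull_min
      (iUnion_subset fun i => (subset_convexHull ℝ (P i)).trans <|
        (hQ i).superset.trans (convexHull_mono (subset_iUnion Q i))) (convex_convexHull ℝ _)
  obtain ⟨i₀, hmax⟩ := Finite.exists_max fun i => (Q i).ncard
  rw [← hhull, mul_assoc]
  refine ncard_isExposed_convexHull_iUnion_le hdim (fun i => (hfin i).subset (hQP i)) hmax
    fun hsub => hP i₀ ?_
  calc ⋃ j, P j ⊆ convexHull ℝ (⋃ j, P j) := subset_convexHull ℝ _
    _ = convexHull ℝ (⋃ j, Q j) := hhull.symm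
    _ ⊆ affineSpan ℝ (Q i₀) := convexHull_min hsub (AffineSubspace.convex _)
    _ ⊆ affineSpan ℝ (P i₀) := affineSpan_mono ℝ (hQP i₀)

theorem stmt0 (d m : ℕ) (hd : 3 ≤ d) (hodd : Odd d) (hm : 2 ≤ m) :
    ∃ c : ℝ, 0 < c ∧
      ∀ (u : EuclideanSpace ℝ (Fin (d + 1))) (t : Fin m → ℝ)
        (P : Fin m → Set (EuclideanSpace ℝ (Fin (d + 1)))),
        ‖u‖ = 1 → StrictMono t →
        (∀ i, (P i).Finite) →
        (∀ i, P i ⊆ {x | ⟪x, u⟫ = t i}) →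
        (∀ i, adim (convexHull ℝ (P i)) = d) →
        (totalFaces (convexHull ℝ (⋃ i, P i)) : ℝ) ≤
          c * ∑ i : Fin m, ∑ j : Fin m,
            if i ≠ j then
              (((convexHull ℝ (P i)).extremePoints ℝ).ncard : ℝ) *
                (((convexHull ℝ (P j)).extremePoints ℝ).ncard : ℝ) ^ (d / 2)
            else 0 := by
  have : Nontrivial (Fin m) := Fin.nontrivial_iff_two_le.2 hm
  refine ⟨4 ^ (d / 2 + 3) * ((d / 2 : ℕ) + 1) * Fintype.card (Fin m) ^ (d / 2), by positivity,
    fun u t P _ ht hfin hP hadim => ?_⟩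
  exact_mod_cast stmt0_general (k := d / 2) (by rw [finrank_euclideanSpace_fin]; lia) hfin
    (not_iUnion_subset_affineSpan_of_parallel ht.injective hP fun i => by rw [hadim i]; lia)
end

section
/- Fix an odd integer d ≥ 3 and an integer m ≥ 2. There exist a constant c > 0 and an integer n_0, depending only on d and m, such that for all integers n_1, …, n_m ≥ n_0 there exist m parallel hyperplanes Π_1, …, Π_m in E^{d+1} and finite sets P_i ⊂ Π_i such that each 𝒫_i = conv(P_i) is a d-dimensional polytope with exactly n_i vertices, and the total number of nonempty exposed faces of conv(P_1 ∪ … ∪ P_m) is at least c · Σ_{1 ≤ i ≠ j ≤ m} n_i · n_j^{⌊d/2⌋}. (Corollary 4.3, the lower bound part of Theorem 2.6.) -/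
/-!
Write `d = 2k + 1`. Each polytope has about half of its vertices on a moment curve in `ℝ^{2k}` and
the others on a parabola in the plane spanned by one further coordinate and the last coordinate of
the moment curve. For two heights `a ≠ b`, any `k` of the points of the moment curve at height `a`
together with any one point `y₀` of the parabola at height `b` are exposed among all the points of
these two curves: up to a common constant, obtained by tilting along the height, the functional is
`-∏ (t - s)²` on the moment curve, where `s` runs over the `k` parameters, and `-(y - y₀)²` on the
parabola. All these functionals have coefficient `-1` at the last coordinate, so every other point
can be moved far along it without affecting these faces, and the translation costs no vertices.
This gives of the order of `n_b * n_a ^ k` faces for any prescribed pair `(a, b)`. The pair for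
which this number is largest accounts for the whole sum up to the factor `m²`.
-/

open Set Pointwise RealInnerProductSpace

section ConvexHull

open Filter

variable {E : Type*} [AddCommGroup E] [Module ℝ E]

theorem lt_of_mem_convexHull_of_ne {X : Set E} {x y : E} (l : E →ₗ[ℝ] ℝ)
    (hl : ∀ z ∈ X, z ≠ x → l z < l x) (hx : x ∈ X) (hy : y ∈ convexHull ℝ X) (hyx : y ≠ x) :
    l y < l x := by
  have hsplit : insert x (X \ {x}) = X := by rw [insert_sdiff_singleton, insert_eq_of_mem hx]
  have hrest : convexHull ℝ (X \ {x}) ⊆ {z | l z < l x} :=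
    convexHull_min (fun z hz => hl z hz.1 hz.2) (convex_halfSpace_lt l.isLinear _)
  rcases (X \ {x}).eq_empty_or_nonempty with hempty | hne
  · rw [← hsplit, hempty, insert_empty_eq, convexHull_singleton] at hy
    exact absurd hy hyx
  · rw [← hsplit, convexHull_insert hne, convexJoin_singleton_left] at hy
    obtain ⟨z, hz, a, b, -, hb, hab, rfl⟩ := mem_iUnion₂.1 hy
    have hb' : b ≠ 0 := by
      rintro rfl
      exact hyx (by simp [show a = 1 by linarith])
    have hzx : b * l z < b * l x := mul_lt_mul_of_pos_left (hrest hz) (hb.lt_of_ne' hb')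
    calc l (a • x + b • z) = a * l x + b * l z := by simp
      _ < a * l x + b * l x := by gcongr
      _ = l x := by rw [← add_mul, hab, one_mul]

variable [TopologicalSpace E]

theorem extremePoints_convexHull_eq_self {X : Set E}
    (h : ∀ x ∈ X, ∃ l : StrongDual ℝ E, ∀ y ∈ X, y ≠ x → l y < l x) :
    (convexHull ℝ X).extremePoints ℝ = X := by
  refine extremePoints_convexHull_subset.antisymm fun x hx => ?_
  obtain ⟨l, hl⟩ := h x hx
  have hlt := fun y => lt_of_mem_convexHull_of_ne l.toLinearMap (y := y) hl hx
  refine exposedPoints_subset_extremePoints ⟨subset_convexHull ℝ X hx, l, fun y hy => ⟨?_, ?_⟩⟩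
  · rcases eq_or_ne y x with rfl | hyx
    exacts [le_rfl, (hlt y hy hyx).le]
  · exact fun hle => by_contra fun hyx => hle.not_gt (hlt y hy hyx)

theorem toExposed_convexHull_inter (l : StrongDual ℝ E) (X : Set E) :
    l.toExposed (convexHull ℝ X) ∩ X = l.toExposed X := by
  refine Subset.antisymm (fun x hx => ⟨hx.2, fun y hy => hx.1.2 y (subset_convexHull ℝ X hy)⟩) ?_
  rintro x ⟨hx, hmax⟩
  exact ⟨⟨subset_convexHull ℝ X hx, convexHull_min hmax
    (convex_halfSpace_le l.toLinearMap.isLinear (l x))⟩, hx⟩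

theorem toExposed_eq_sep_of_forall_le {l : StrongDual ℝ E} {X : Set E} {M : ℝ} {x₀ : E}
    (hle : ∀ x ∈ X, l x ≤ M) (hx₀ : x₀ ∈ X) (hM : l x₀ = M) :
    l.toExposed X = {x ∈ X | l x = M} := by
  ext x
  refine and_congr_right fun hx => ⟨fun hmax => ?_, fun hxM y hy => ?_⟩
  · exact (hle x hx).antisymm (hM ▸ hmax x₀ hx₀)
  · exact hxM ▸ hle y hy

theorem eventually_toExposed_eq_of_subset_union_vadd {l : StrongDual ℝ E} {e : E} {X Y : Set E}
    (he : l e < 0) (hX : (l.toExposed X).Nonempty) (hY : Y.Finite) :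
    ∀ᶠ R : ℝ in atTop, ∀ Z, X ⊆ Z → Z ⊆ X ∪ (R • e +ᵥ Y) → l.toExposed Z = l.toExposed X := by
  obtain ⟨x₀, hx₀, hmax⟩ := hX
  have hfar : ∀ᶠ R : ℝ in atTop, ∀ y ∈ Y, l (R • e + y) < l x₀ := by
    refine (eventually_all_finite hY).2 fun y _ => ?_
    filter_upwards [eventually_gt_atTop ((l x₀ - l y) / l e)] with R hR
    rw [div_lt_iff_of_neg he] at hR
    simp only [map_add, map_smul, smul_eq_mul]
    linarith
  filter_upwards [hfar] with R hR Z hXZ hZ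
  have hle : ∀ z ∈ Z, l z ≤ l x₀ := fun z hz => by
    rcases hZ hz with hz | ⟨y, hy, rfl⟩
    exacts [hmax z hz, (hR y hy).le]
  rw [toExposed_eq_sep_of_forall_le hle (hXZ hx₀) rfl, toExposed_eq_sep_of_forall_le hmax hx₀ rfl]
  refine Subset.antisymm (fun z hz => ⟨?_, hz.2⟩) fun z hz => ⟨hXZ hz.1, hz.2⟩
  rcases hZ hz.1 with hzX | ⟨y, hy, rfl⟩
  exacts [hzX, absurd hz.2 (hR y hy).ne]

variable [IsTopologicalAddGroup E] [ContinuousSMul ℝ E] [T2Space E] [LocallyConvexSpace ℝ E]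

-- By Krein–Milman a face is determined by its extreme points, which are extreme points of the hull.
theorem finite_setOf_isExposed_convexHull {X : Set E} (hX : X.Finite) :
    {F | IsExposed ℝ (convexHull ℝ X) F}.Finite := by
  refine Set.Finite.of_finite_image (f := fun F => F.extremePoints ℝ)
    (hX.finite_subsets.subset ?_) ?_
  · rintro _ ⟨F, hF, rfl⟩
    exact hF.isExtreme.extremePoints_subset_extremePoints.trans extremePoints_convexHull_subset
  · have hrecover : ∀ F, IsExposed ℝ (convexHull ℝ X) F →
        closure (convexHull ℝ (F.extremePoints ℝ)) = F := fun F hF =>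
      closure_convexHull_extremePoints (hF.isCompact (hX.isCompact_convexHull (𝕜 := ℝ)))
        (hF.convex (convex_convexHull ℝ X))
    intro F hF G hG hFG
    rw [← hrecover F hF, ← hrecover G hG]
    exact congrArg (fun V => closure (convexHull ℝ V)) hFG

theorem card_le_ncard_isExposed_convexHull {ι : Type*} {X : Set E} (hX : X.Finite)
    (l : ι → StrongDual ℝ E) (hne : ∀ i, ((l i).toExposed X).Nonempty)
    (hinj : Function.Injective fun i => (l i).toExposed X) :
    Nat.card ι ≤ {F | IsExposed ℝ (convexHull ℝ X) F ∧ F.Nonempty}.ncard := by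
  have hinj' : Function.Injective fun i => (l i).toExposed (convexHull ℝ X) := by
    refine Function.Injective.of_comp (f := fun F => F ∩ X) ?_
    simpa only [Function.comp_def, toExposed_convexHull_inter] using hinj
  rw [← Nat.card_range_of_injective hinj', Nat.card_coe_set_eq]
  refine ncard_le_ncard ?_ ((finite_setOf_isExposed_convexHull hX).subset fun F hF => hF.1)
  rintro _ ⟨i, rfl⟩
  have hsub := (toExposed_convexHull_inter (l i) X).symm.subset.trans inter_subset_left
  exact ⟨ContinuousLinearMap.toExposed.isExposed, (hne i).mono hsub⟩

end ConvexHull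

section Dimension

open Module

variable {E : Type*} [NormedAddCommGroup E] [InnerProductSpace ℝ E]

theorem mem_orthogonal_vectorSpan {X : Set E} {v : E} :
    v ∈ (vectorSpan ℝ X)ᗮ ↔ ∀ x ∈ X, ∀ y ∈ X, ⟪v, x⟫ = ⟪v, y⟫ := by
  rw [← Submodule.span_singleton_le_iff_mem, ← Submodule.isOrtho_iff_le, vectorSpan_def,
    Submodule.isOrtho_span]
  simp only [mem_singleton_iff, forall_eq, mem_vsub, forall_exists_index, and_imp, vsub_eq_sub]
  refine ⟨fun h x hx y hy => ?_, fun h _ x hx y hy hxy => ?_⟩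
  · rw [← sub_eq_zero, ← inner_sub_right]
    exact h x hx y hy rfl
  · rw [← hxy, inner_sub_right, h x hx y hy, sub_self]

theorem finrank_vectorSpan_add_one [FiniteDimensional ℝ E] {X : Set E} {u : E} (hu : u ≠ 0)
    (hX : ∀ v, (∀ x ∈ X, ∀ y ∈ X, ⟪v, x⟫ = ⟪v, y⟫) ↔ v ∈ ℝ ∙ u) :
    finrank ℝ (vectorSpan ℝ X) + 1 = finrank ℝ E := by
  have horth : (vectorSpan ℝ X)ᗮ = ℝ ∙ u :=
    Submodule.ext fun v => mem_orthogonal_vectorSpan.trans (hX v)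
  rw [← (vectorSpan ℝ X).finrank_add_finrank_orthogonal, horth, finrank_span_singleton hu]

end Dimension

section Coordinates

open Polynomial

/-- The point of `ℝ^{N+2}` with height `w`, then coordinate `z`, then the coordinates `v ∈ ℝ^N`.
The parallel hyperplanes of the construction are the sets of constant height. -/
noncomputable def ofCoords {N : ℕ} (w z : ℝ) (v : Fin N → ℝ) : EuclideanSpace ℝ (Fin (N + 2)) :=
  WithLp.toLp 2 (Matrix.vecCons w (Matrix.vecCons z v))

/-- The point with parameter `t` on the moment curve `(t, t², …, t^N)` at height `w`. -/
noncomputable def momentPoint (N : ℕ) (w t : ℝ) : EuclideanSpace ℝ (Fin (N + 2)) :=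
  ofCoords w 0 fun i => t ^ (i.1 + 1)

/-- The direction of the coordinate that is `t^N` on the moment curve. Points are moved along it
to keep them out of prescribed faces. -/
noncomputable def pushDir (N : ℕ) : EuclideanSpace ℝ (Fin (N + 2)) :=
  ofCoords 0 0 fun i => if i.1 + 1 = N then 1 else 0

/-- The point with parameter `y` on a parabola at height `w` in the plane spanned by the coordinate
`z` and `pushDir N`. -/
noncomputable def parabolaPoint (N : ℕ) (w y : ℝ) : EuclideanSpace ℝ (Fin (N + 2)) :=
  ofCoords w y 0 + y ^ 2 • pushDir N

/-- The linear functional whose coefficients are `h` at the height, `s` at `z`, and those of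
`p - p(0)` at the coordinates of the moment curve. -/
noncomputable def polyFunctional (N : ℕ) (p : ℝ[X]) (s h : ℝ) :
    StrongDual ℝ (EuclideanSpace ℝ (Fin (N + 2))) :=
  innerSL ℝ (ofCoords h s fun i => p.coeff (i.1 + 1))

variable {N : ℕ}

theorem inner_ofCoords (w z w' z' : ℝ) (v v' : Fin N → ℝ) :
    ⟪ofCoords w z v, ofCoords w' z' v'⟫ = w * w' + z * z' + ∑ i, v i * v' i := by
  simp only [ofCoords, EuclideanSpace.inner_toLp_toLp, star_trivial, Matrix.cons_dotProduct_cons]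
  simp only [dotProduct, mul_comm, add_assoc]

theorem ofCoords_apply_zero (w z : ℝ) (v : Fin N → ℝ) : ofCoords w z v 0 = w := rfl

theorem ofCoords_zero_zero (w : ℝ) :
    (ofCoords w 0 0 : EuclideanSpace ℝ (Fin (N + 2))) = w • EuclideanSpace.single 0 1 := by
  ext i
  refine Fin.cases ?_ (Fin.cases ?_ fun i => ?_) i <;> simp [ofCoords]

theorem ofCoords_self (x : EuclideanSpace ℝ (Fin (N + 2))) :
    ofCoords (x 0) (x 1) (fun i => x i.succ.succ) = x := by
  ext i
  refine Fin.cases rfl (fun i => Fin.cases rfl (fun i => rfl) i) i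

theorem momentPoint_apply_zero (w t : ℝ) : momentPoint N w t 0 = w := rfl

theorem momentPoint_apply_one (w t : ℝ) : momentPoint N w t 1 = 0 := rfl

theorem pushDir_apply_zero : pushDir N 0 = 0 := rfl

theorem parabolaPoint_apply_zero (w y : ℝ) : parabolaPoint N w y 0 = w := by
  simp [parabolaPoint, ofCoords_apply_zero, pushDir_apply_zero]

theorem pushDir_apply_one : pushDir N 1 = 0 := rfl

theorem parabolaPoint_apply_one (w y : ℝ) : parabolaPoint N w y 1 = y := by
  simp [parabolaPoint, pushDir_apply_one, ofCoords]

theorem momentPoint_injective (hN : 0 < N) (w : ℝ) : Function.Injective (momentPoint N w) := by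
  intro t t' h
  have hcoord := congrArg (fun x => x (Fin.succ (Fin.succ ⟨0, hN⟩))) h
  simpa [momentPoint, ofCoords] using hcoord

theorem parabolaPoint_injective (w : ℝ) : Function.Injective (parabolaPoint N w) :=
  Function.LeftInverse.injective (g := fun x : EuclideanSpace ℝ (Fin (N + 2)) => x 1)
    (parabolaPoint_apply_one w)

theorem polyFunctional_pushDir (hN : 0 < N) (p : ℝ[X]) (s h : ℝ) :
    polyFunctional N p s h (pushDir N) = p.coeff N := by
  rw [polyFunctional, innerSL_apply_apply, pushDir, inner_ofCoords,
    Finset.sum_eq_single ⟨N - 1, by lia⟩]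
  · simp [Nat.sub_add_cancel hN]
  · intro i _ hi
    rw [if_neg (fun hiN => hi (Fin.ext (by simp; lia))), mul_zero]
  · simp

theorem polyFunctional_momentPoint {p : ℝ[X]} (hp : p.natDegree ≤ N) (s h w t : ℝ) :
    polyFunctional N p s h (momentPoint N w t) = p.eval t - p.coeff 0 + h * w := by
  rw [polyFunctional, innerSL_apply_apply, momentPoint, inner_ofCoords,
    Fin.sum_univ_eq_sum_range (fun i => p.coeff (i + 1) * t ^ (i + 1)),
    eval_eq_sum_range' (Nat.lt_succ_of_le hp), Finset.sum_range_succ']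
  ring

theorem polyFunctional_parabolaPoint (hN : 0 < N) (p : ℝ[X]) (s h w y : ℝ) :
    polyFunctional N p s h (parabolaPoint N w y) = p.coeff N * y ^ 2 + s * y + h * w := by
  rw [parabolaPoint, map_add, map_smul, polyFunctional_pushDir hN, polyFunctional,
    innerSL_apply_apply, inner_ofCoords]
  simp only [Pi.zero_apply, mul_zero, Finset.sum_const_zero, smul_eq_mul]
  ring

theorem exists_polyFunctional_eq (hN : 0 < N) (v : EuclideanSpace ℝ (Fin (N + 2))) :
    ∃ p : ℝ[X], p.natDegree ≤ N ∧ p.coeff 0 = 0 ∧ innerSL ℝ v = polyFunctional N p (v 1) (v 0) := by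
  refine ⟨X * ofFn N (fun i => v i.succ.succ), ?_, by simp, ?_⟩
  · have hdeg := ofFn_natDegree_lt hN fun i : Fin N => v i.succ.succ
    exact natDegree_mul_le.trans (by rw [natDegree_X]; lia)
  · rw [polyFunctional]
    congr 1
    nth_rw 1 [← ofCoords_self v]
    congr 1
    ext i
    simp

end Coordinates

section Layer

open Polynomial

/-- The vertices of one of the polytopes: the points of the moment curve with parameters in `A` and
the points of the parabola with parameters in `B`, all at height `w`, the former moved by `σ` and
the latter by `ρ` along `pushDir N`. -/
def layer (N : ℕ) (w σ ρ : ℝ) (A B : Finset ℝ) : Set (EuclideanSpace ℝ (Fin (N + 2))) :=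
  (fun t => momentPoint N w t + σ • pushDir N) '' A ∪
    (fun y => parabolaPoint N w y + ρ • pushDir N) '' B

variable {N : ℕ} {w σ ρ : ℝ} {A B : Finset ℝ}

theorem finite_layer : (layer N w σ ρ A B).Finite :=
  (A.finite_toSet.image _).union (B.finite_toSet.image _)

theorem apply_zero_of_mem_layer {x : EuclideanSpace ℝ (Fin (N + 2))}
    (hx : x ∈ layer N w σ ρ A B) : x 0 = w := by
  rcases hx with ⟨t, -, rfl⟩ | ⟨y, -, rfl⟩
  · simp [momentPoint_apply_zero, pushDir_apply_zero]
  · simp [parabolaPoint_apply_zero, pushDir_apply_zero]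

theorem forall_mem_layer {q : EuclideanSpace ℝ (Fin (N + 2)) → Prop} :
    (∀ x ∈ layer N w σ ρ A B, q x) ↔
      (∀ t ∈ A, q (momentPoint N w t + σ • pushDir N)) ∧
        ∀ y ∈ B, q (parabolaPoint N w y + ρ • pushDir N) := by
  simp only [layer, mem_union, or_imp, forall_and, forall_mem_image, Finset.mem_coe]

theorem ncard_layer (hN : 0 < N) (hB : ∀ y ∈ B, 0 < y) :
    (layer N w σ ρ A B).ncard = A.card + B.card := by
  have hdisj : Disjoint ((fun t => momentPoint N w t + σ • pushDir N) '' (A : Set ℝ))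
      ((fun y => parabolaPoint N w y + ρ • pushDir N) '' B) := by
    rw [Set.disjoint_left]
    rintro _ ⟨t, -, rfl⟩ ⟨y, hy, hyt⟩
    have hy0 := congrArg (fun x => x 1) hyt
    simp only [PiLp.add_apply, PiLp.smul_apply, pushDir_apply_one, parabolaPoint_apply_one,
      momentPoint_apply_one, smul_zero, add_zero] at hy0
    exact (hB y hy).ne' hy0
  have hmoment := (add_left_injective (σ • pushDir N)).comp (momentPoint_injective hN w)
  have hparabola := (add_left_injective (ρ • pushDir N)).comp (parabolaPoint_injective w)
  rw [layer, ncard_union_eq hdisj (A.finite_toSet.image _) (B.finite_toSet.image _)]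
  exact congrArg₂ _ ((ncard_image_of_injective _ hmoment).trans (ncard_coe_finset A))
    ((ncard_image_of_injective _ hparabola).trans (ncard_coe_finset B))

theorem exists_forall_mul_lt (hB : ∀ y ∈ B, 0 < y) (f : ℝ → ℝ) : ∃ s, ∀ y ∈ B, s * y < f y :=
  ((Filter.eventually_all_finset B).2 fun y hy =>
    (Filter.tendsto_id.atBot_mul_const (hB y hy)).eventually_lt_atBot (f y)).exists

theorem exists_lt_momentPoint (hN : 2 ≤ N) (hB : ∀ y ∈ B, 0 < y) (t : ℝ) :
    ∃ l : StrongDual ℝ (EuclideanSpace ℝ (Fin (N + 2))), ∀ x ∈ layer N w σ ρ A B,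
      x ≠ momentPoint N w t + σ • pushDir N → l x < l (momentPoint N w t + σ • pushDir N) := by
  have hN0 : 0 < N := zero_lt_two.trans_le hN
  set p : ℝ[X] := -(X - C t) ^ 2 with hp
  have hdeg : p.natDegree ≤ N := by
    rwa [hp, natDegree_neg, natDegree_pow, natDegree_X_sub_C]
  have heval : ∀ t', p.eval t' = -(t' - t) ^ 2 := fun t' => by simp [hp]
  obtain ⟨s, hs⟩ := exists_forall_mul_lt hB fun y =>
    σ * p.coeff N - p.coeff 0 - p.coeff N * y ^ 2 - ρ * p.coeff N
  refine ⟨polyFunctional N p s 0, ?_⟩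
  simp only [forall_mem_layer, map_add, map_smul, smul_eq_mul, polyFunctional_pushDir hN0,
    polyFunctional_momentPoint hdeg, polyFunctional_parabolaPoint hN0, heval]
  refine ⟨fun t' _ ht' => ?_, fun y hy _ => by linarith [hs y hy]⟩
  have hne : t' - t ≠ 0 := sub_ne_zero.2 fun h => ht' (by rw [h])
  linarith [sq_pos_of_ne_zero hne]

theorem exists_lt_parabolaPoint (hN : 2 ≤ N) (hA : ∀ t ∈ A, 0 < t) (y : ℝ) :
    ∃ l : StrongDual ℝ (EuclideanSpace ℝ (Fin (N + 2))), ∀ x ∈ layer N w σ ρ A B,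
      x ≠ parabolaPoint N w y + ρ • pushDir N →
        l x < l (parabolaPoint N w y + ρ • pushDir N) := by
  have hN0 : 0 < N := zero_lt_two.trans_le hN
  obtain ⟨c, hc⟩ := exists_forall_mul_lt hA fun t => y ^ 2 - ρ + t ^ N + σ
  set p : ℝ[X] := C c * X - X ^ N with hp
  have hdeg : p.natDegree ≤ N := (natDegree_sub_le _ _).trans <|
    max_le (((natDegree_C_mul_le _ _).trans natDegree_X_le).trans hN0) (natDegree_X_pow_le N)
  have hlead : p.coeff N = -1 := by
    simp [hp, coeff_X, (show 1 ≠ N by lia)]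
  have hconst : p.coeff 0 = 0 := by
    simp [hp, hN0.ne]
  have heval : ∀ t, p.eval t = c * t - t ^ N := fun t => by simp [hp]
  refine ⟨polyFunctional N p (2 * y) 0, ?_⟩
  simp only [forall_mem_layer, map_add, map_smul, smul_eq_mul, polyFunctional_pushDir hN0,
    polyFunctional_momentPoint hdeg, polyFunctional_parabolaPoint hN0, heval, hlead, hconst]
  refine ⟨fun t ht _ => by linarith [hc t ht], fun y' _ hy' => ?_⟩
  have hne : y' - y ≠ 0 := sub_ne_zero.2 fun h => hy' (by rw [h])
  linarith [sq_pos_of_ne_zero hne]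

theorem extremePoints_convexHull_layer (hN : 2 ≤ N) (hA : ∀ t ∈ A, 0 < t)
    (hB : ∀ y ∈ B, 0 < y) :
    (convexHull ℝ (layer N w σ ρ A B)).extremePoints ℝ = layer N w σ ρ A B :=
  extremePoints_convexHull_eq_self <| forall_mem_layer.2
    ⟨fun t _ => exists_lt_momentPoint hN hB t, fun y _ => exists_lt_parabolaPoint hN hA y⟩

theorem eq_C_of_forall_eval_eq {p : ℝ[X]} (hp : p.natDegree < A.card)
    (hpA : ∀ t ∈ A, ∀ t' ∈ A, p.eval t = p.eval t') : p = C (p.coeff 0) := by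
  obtain ⟨t₀, ht₀⟩ := Finset.card_pos.1 (Nat.zero_lt_of_lt hp)
  have hzero : p - C (p.eval t₀) = 0 := by
    refine eq_zero_of_natDegree_lt_card_of_eval_eq_zero' _ A (fun t ht => ?_) ?_
    · rw [eval_sub, eval_C, hpA t ht t₀ ht₀, sub_self]
    · rwa [natDegree_sub_C]
  rw [sub_eq_zero.1 hzero, coeff_C_zero]

theorem inner_eq_on_layer_iff (hN : 0 < N) (hA : N < A.card) (hB : ∃ y ∈ B, y ≠ 0)
    {v : EuclideanSpace ℝ (Fin (N + 2))} :
    (∀ x ∈ layer N w σ ρ A B, ∀ x' ∈ layer N w σ ρ A B, ⟪v, x⟫ = ⟪v, x'⟫) ↔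
      v ∈ ℝ ∙ (EuclideanSpace.single 0 1 : EuclideanSpace ℝ (Fin (N + 2))) := by
  rw [Submodule.mem_span_singleton]
  refine ⟨fun hv => ⟨v 0, ?_⟩, ?_⟩
  · obtain ⟨p, hp, hp0, hvp⟩ := exists_polyFunctional_eq hN v
    obtain ⟨y, hy, hy0⟩ := hB
    obtain ⟨t₀, ht₀⟩ := Finset.card_pos.1 (Nat.zero_lt_of_lt hA)
    simp only [← innerSL_apply_apply (𝕜 := ℝ), hvp, forall_mem_layer, map_add, map_smul,
      polyFunctional_pushDir hN, polyFunctional_momentPoint hp,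
      polyFunctional_parabolaPoint hN] at hv
    have hpzero : p = 0 := by
      rw [eq_C_of_forall_eval_eq (hp.trans_lt hA) fun t ht t' ht' => by
        linarith [(hv.1 t ht).1 t' ht'], hp0, C_0]
    have hv1 : v 1 = 0 := by
      have hvy := (hv.1 t₀ ht₀).2 y hy
      simp only [hpzero, coeff_zero, eval_zero] at hvy
      simpa [hy0] using hvy
    have hv0 : v = ofCoords (v 0) 0 0 := by
      rw [← innerSL_inj (𝕜 := ℝ), hvp, hpzero, hv1]
      rfl
    rw [← ofCoords_zero_zero, ← hv0]
  · rintro ⟨c, rfl⟩ x hx x' hx'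
    simp [inner_smul_left, EuclideanSpace.inner_single_left, apply_zero_of_mem_layer hx,
      apply_zero_of_mem_layer hx']

theorem adim_convexHull_layer (hN : 0 < N) (hA : N < A.card) (hB : ∃ y ∈ B, y ≠ 0) :
    adim (convexHull ℝ (layer N w σ ρ A B)) = N + 1 := by
  have hu : (EuclideanSpace.single 0 1 : EuclideanSpace ℝ (Fin (N + 2))) ≠ 0 := by simp
  have hdim := finrank_vectorSpan_add_one hu fun v =>
    inner_eq_on_layer_iff (w := w) (σ := σ) (ρ := ρ) (v := v) hN hA hB
  rw [adim, ← direction_affineSpan, affineSpan_convexHull, direction_affineSpan]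
  exact Nat.succ_injective (hdim.trans finrank_euclideanSpace_fin)

end Layer

section MixedFaces

open Polynomial

/-- The vertices of a face joining the heights `a` and `b`: the points of the moment curve at
height `a` with parameters in `S`, and one point of the parabola at height `b`. -/
def mixedFace (N : ℕ) (a b : ℝ) (S : Finset ℝ) (y : ℝ) : Set (EuclideanSpace ℝ (Fin (N + 2))) :=
  momentPoint N a '' S ∪ {parabolaPoint N b y}

variable {N k : ℕ} {a b : ℝ}

theorem momentPoint_mem_mixedFace (hN : 0 < N) (hab : a ≠ b) {S : Finset ℝ} {t y : ℝ} :
    momentPoint N a t ∈ mixedFace N a b S y ↔ t ∈ S := by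
  refine ⟨?_, fun ht => Or.inl (mem_image_of_mem _ ht)⟩
  rintro (ht | ht)
  · exact (momentPoint_injective hN a).mem_set_image.1 ht
  · have h0 := congrArg (fun x => x 0) ht
    simp only [momentPoint_apply_zero, parabolaPoint_apply_zero] at h0
    exact absurd h0 hab

theorem parabolaPoint_mem_mixedFace (hab : a ≠ b) {S : Finset ℝ} {y y' : ℝ} :
    parabolaPoint N b y' ∈ mixedFace N a b S y ↔ y' = y := by
  refine ⟨?_, fun hy => Or.inr (congrArg _ hy)⟩
  rintro (⟨t, -, ht⟩ | hy)
  · have h0 := congrArg (fun x => x 0) ht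
    simp only [momentPoint_apply_zero, parabolaPoint_apply_zero] at h0
    exact absurd h0 hab
  · exact parabolaPoint_injective b hy

theorem mixedFace_injective (hN : 0 < N) (hab : a ≠ b) :
    Function.Injective fun q : Finset ℝ × ℝ => mixedFace N a b q.1 q.2 := by
  rintro ⟨S, y⟩ ⟨S', y'⟩ h
  simp only [Set.ext_iff] at h
  refine Prod.ext (Finset.ext fun t => ?_) ?_
  · simpa only [momentPoint_mem_mixedFace hN hab] using h (momentPoint N a t)
  · simpa only [parabolaPoint_mem_mixedFace hab, true_iff] using h (parabolaPoint N b y)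

theorem exists_mixed_functional (hk : 0 < k) (hab : a ≠ b) {S : Finset ℝ} (hS : S.card = k)
    (y₀ : ℝ) :
    ∃ (l : StrongDual ℝ (EuclideanSpace ℝ (Fin (2 * k + 2)))) (M : ℝ),
      l (pushDir (2 * k)) < 0 ∧
      (∀ t, l (momentPoint (2 * k) a t) = M - (Lagrange.nodal S id).eval t ^ 2) ∧
      ∀ y, l (parabolaPoint (2 * k) b y) = M - (y - y₀) ^ 2 := by
  have hN : 0 < 2 * k := by lia
  set p : ℝ[X] := -Lagrange.nodal S id ^ 2 with hp
  have hdeg : p.natDegree = 2 * k := by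
    rw [hp, natDegree_neg, natDegree_pow, Lagrange.natDegree_nodal, hS]
  have hlead : p.coeff (2 * k) = -1 := by
    rw [← hdeg, coeff_natDegree, hp, leadingCoeff_neg,
      ((Lagrange.nodal_monic (s := S) (v := id)).pow 2).leadingCoeff]
  obtain ⟨h, hh⟩ : ∃ h, h * (a - b) = y₀ ^ 2 + p.coeff 0 :=
    ⟨_, div_mul_cancel₀ _ (sub_ne_zero.2 hab)⟩
  refine ⟨polyFunctional (2 * k) p (2 * y₀) h, y₀ ^ 2 + h * b, ?_, fun t => ?_, fun y => ?_⟩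
  · rw [polyFunctional_pushDir hN, hlead]
    exact neg_one_lt_zero
  · rw [polyFunctional_momentPoint hdeg.le, hp, eval_neg, eval_pow, ← hp]
    linear_combination hh
  · rw [polyFunctional_parabolaPoint hN, hlead]
    ring

theorem exists_toExposed_eq_mixedFace (hk : 0 < k) (hab : a ≠ b) {A B S : Finset ℝ}
    (hSA : S ⊆ A) (hS : S.card = k) {y₀ : ℝ} (hy₀ : y₀ ∈ B) :
    ∃ l : StrongDual ℝ (EuclideanSpace ℝ (Fin (2 * k + 2))), l (pushDir (2 * k)) < 0 ∧
      l.toExposed (momentPoint (2 * k) a '' A ∪ parabolaPoint (2 * k) b '' B) =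
        mixedFace (2 * k) a b S y₀ := by
  obtain ⟨l, M, hpush, hmoment, hparabola⟩ := exists_mixed_functional hk hab hS y₀
  have hroot : ∀ t, (Lagrange.nodal S id).eval t = 0 ↔ t ∈ S := fun t => by
    simp [Lagrange.eval_nodal, Finset.prod_eq_zero_iff, sub_eq_zero]
  refine ⟨l, hpush, ?_⟩
  rw [toExposed_eq_sep_of_forall_le (M := M) ?_ (.inr (mem_image_of_mem _ hy₀))
    (by simp [hparabola])]
  · ext x
    constructor
    · rintro ⟨⟨t, -, rfl⟩ | ⟨y, -, rfl⟩, hx⟩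
      · have ht : (Lagrange.nodal S id).eval t = 0 := by simpa [hmoment] using hx
        exact .inl (mem_image_of_mem _ ((hroot t).1 ht))
      · have hy : y - y₀ = 0 := by simpa [hparabola] using hx
        exact .inr (congrArg _ (sub_eq_zero.1 hy))
    · rintro (⟨t, ht, rfl⟩ | rfl)
      · exact ⟨.inl (mem_image_of_mem _ (hSA ht)), by simp [hmoment, (hroot t).2 ht]⟩
      · exact ⟨.inr (mem_image_of_mem _ hy₀), by simp [hparabola]⟩
  · rintro _ (⟨t, -, rfl⟩ | ⟨y, -, rfl⟩)
    · linarith [hmoment t, sq_nonneg ((Lagrange.nodal S id).eval t)]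
    · linarith [hparabola y, sq_nonneg (y - y₀)]

end MixedFaces

section Counting

theorem mul_pow_le_choose_mul {k x y : ℕ} (hx : 4 * k ≤ x) :
    y * x ^ k ≤ 2 * 4 ^ k * k.factorial * ((x / 2).choose k * (y - y / 2)) := by
  have hbase : x ≤ 4 * (x / 2 + 1 - k) := by lia
  have hchoose : x ^ k ≤ 4 ^ k * (k.factorial * (x / 2).choose k) :=
    calc x ^ k ≤ (4 * (x / 2 + 1 - k)) ^ k := by gcongr
      _ = 4 ^ k * (x / 2 + 1 - k) ^ k := mul_pow _ _ _
      _ ≤ 4 ^ k * (x / 2).descFactorial k := by gcongr; exact Nat.pow_sub_le_descFactorial _ _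
      _ = 4 ^ k * (k.factorial * (x / 2).choose k) := by
        rw [Nat.descFactorial_eq_factorial_mul_choose]
  calc y * x ^ k ≤ (2 * (y - y / 2)) * (4 ^ k * (k.factorial * (x / 2).choose k)) :=
        Nat.mul_le_mul (by lia) hchoose
    _ = 2 * 4 ^ k * k.factorial * ((x / 2).choose k * (y - y / 2)) := by ring

theorem exists_sum_sum_ne_le {ι : Type*} [Fintype ι] [Nontrivial ι] [DecidableEq ι]
    {f : ι → ι → ℝ} (hf : ∀ i j, 0 ≤ f i j) :
    ∃ i j, i ≠ j ∧
      ∑ i, ∑ j, (if i ≠ j then f i j else 0) ≤ (Fintype.card ι : ℝ) ^ 2 * f i j := by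
  obtain ⟨i₀, j₀, hne⟩ := exists_pair_ne ι
  obtain ⟨⟨i, j⟩, hij, hmax⟩ := Finset.exists_max_image (Finset.univ : Finset ι).offDiag
    (fun q => f q.1 q.2) ⟨(i₀, j₀), by simpa using hne⟩
  have hle : ∀ i' j', (if i' ≠ j' then f i' j' else 0) ≤ f i j := fun i' j' => by
    split_ifs with h
    · exact hmax (i', j') (by simpa using h)
    · exact hf i j
  refine ⟨i, j, by simpa using hij, ?_⟩
  calc ∑ i, ∑ j, (if i ≠ j then f i j else 0) ≤ ∑ _i : ι, ∑ _j : ι, f i j :=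
        Finset.sum_le_sum fun i' _ => Finset.sum_le_sum fun j' _ => hle i' j'
    _ = (Fintype.card ι : ℝ) ^ 2 * f i j := by
        simp only [Finset.sum_const, Finset.card_univ, nsmul_eq_mul]
        ring

end Counting

section Arrangement

variable {ι : Type*} [DecidableEq ι] {N k : ℕ} {w : ι → ℝ} {A B : ι → Finset ℝ} {a b : ι}

/-- The vertices of the `i`-th polytope when everything is pushed by `R` except the points of the
moment curve at height `w a` and the points of the parabola at height `w b`. -/
def pushedLayer (N : ℕ) (w : ι → ℝ) (A B : ι → Finset ℝ) (a b : ι) (R : ℝ) (i : ι) :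
    Set (EuclideanSpace ℝ (Fin (N + 2))) :=
  layer N (w i) (if i = a then 0 else R) (if i = b then 0 else R) (A i) (B i)

theorem subset_iUnion_pushedLayer (R : ℝ) :
    momentPoint N (w a) '' A a ∪ parabolaPoint N (w b) '' B b ⊆
      ⋃ i, pushedLayer N w A B a b R i := by
  rintro _ (⟨t, ht, rfl⟩ | ⟨y, hy, rfl⟩)
  · exact mem_iUnion.2 ⟨a, .inl ⟨t, ht, by simp⟩⟩
  · exact mem_iUnion.2 ⟨b, .inr ⟨y, hy, by simp⟩⟩

theorem iUnion_pushedLayer_subset (R : ℝ) :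
    ⋃ i, pushedLayer N w A B a b R i ⊆
      (momentPoint N (w a) '' A a ∪ parabolaPoint N (w b) '' B b) ∪
        (R • pushDir N +ᵥ ⋃ i, layer N (w i) 0 0 (A i) (B i)) := by
  refine iUnion_subset fun i => ?_
  rintro _ (⟨t, ht, rfl⟩ | ⟨y, hy, rfl⟩)
  · rcases eq_or_ne i a with rfl | hi
    · exact .inl (.inl ⟨t, ht, by simp⟩)
    · exact .inr ⟨momentPoint N (w i) t, mem_iUnion.2 ⟨i, .inl ⟨t, ht, by simp⟩⟩,
        by simp [hi, add_comm]⟩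
  · rcases eq_or_ne i b with rfl | hi
    · exact .inl (.inr ⟨y, hy, by simp⟩)
    · exact .inr ⟨parabolaPoint N (w i) y, mem_iUnion.2 ⟨i, .inr ⟨y, hy, by simp⟩⟩,
        by simp [hi, add_comm]⟩

theorem exists_choose_mul_card_le_totalFaces [Finite ι] (hk : 0 < k) (hab : w a ≠ w b) :
    ∃ R, (A a).card.choose k * (B b).card ≤
      totalFaces (convexHull ℝ (⋃ i, pushedLayer (2 * k) w A B a b R i)) := by
  let Q := (A a).powersetCard k ×ˢ B b
  have hface : ∀ q : Q, ∃ l : StrongDual ℝ (EuclideanSpace ℝ (Fin (2 * k + 2))),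
      l (pushDir (2 * k)) < 0 ∧
      l.toExposed (momentPoint (2 * k) (w a) '' A a ∪ parabolaPoint (2 * k) (w b) '' B b) =
        mixedFace (2 * k) (w a) (w b) q.1.1 q.1.2 := fun q => by
    obtain ⟨hS, hy⟩ := Finset.mem_product.1 q.2
    obtain ⟨hSA, hSk⟩ := Finset.mem_powersetCard.1 hS
    exact exists_toExposed_eq_mixedFace hk hab hSA hSk hy
  choose l hpush hexp using hface
  have hfar : (⋃ i, layer (2 * k) (w i) 0 0 (A i) (B i)).Finite :=
    finite_iUnion fun i => finite_layer
  have hpair : ∀ S y, (mixedFace (2 * k) (w a) (w b) S y).Nonempty := fun S y => ⟨_, .inr rfl⟩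
  obtain ⟨R, hR⟩ := (Filter.eventually_all.2 fun q =>
    eventually_toExposed_eq_of_subset_union_vadd (hpush q) (hexp q ▸ hpair _ _) hfar).exists
  have hexpR : ∀ q, (l q).toExposed (⋃ i, pushedLayer (2 * k) w A B a b R i) =
      mixedFace (2 * k) (w a) (w b) q.1.1 q.1.2 := fun q =>
    (hR q _ (subset_iUnion_pushedLayer R) (iUnion_pushedLayer_subset R)).trans (hexp q)
  have hcard : Nat.card Q = (A a).card.choose k * (B b).card := by
    rw [Nat.card_eq_fintype_card, Fintype.card_coe, Finset.card_product, Finset.card_powersetCard]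
  refine ⟨R, hcard ▸ card_le_ncard_isExposed_convexHull (finite_iUnion fun i => finite_layer) l
    (fun q => hexpR q ▸ hpair _ _) fun q q' h => ?_⟩
  simp only [hexpR] at h
  exact Subtype.ext (mixedFace_injective (by lia) hab h)

end Arrangement

theorem exists_polytopes_mul_pow_le_totalFaces {ι : Type*} [Finite ι] {k : ℕ} (hk : 0 < k)
    {w : ι → ℝ} {a b : ι} (hw : w a ≠ w b) {n : ι → ℕ} (hn : ∀ i, 4 * k + 2 ≤ n i) :
    ∃ P : ι → Set (EuclideanSpace ℝ (Fin (2 * k + 2))),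
      (∀ i, (P i).Finite) ∧
      (∀ i, ∀ x ∈ P i, x 0 = w i) ∧
      (∀ i, adim (convexHull ℝ (P i)) = 2 * k + 1) ∧
      (∀ i, ((convexHull ℝ (P i)).extremePoints ℝ).ncard = n i) ∧
      n b * n a ^ k ≤ 2 * 4 ^ k * k.factorial * totalFaces (convexHull ℝ (⋃ i, P i)) := by
  classical
  have hpos : ∀ c, ∃ T : Finset ℝ, (∀ t ∈ T, 0 < t) ∧ T.card = c :=
    (Set.Ioi_infinite 0).exists_subset_card_eq
  choose A hA hAcard using fun i => hpos (n i / 2)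
  choose B hB hBcard using fun i => hpos (n i - n i / 2)
  have hAlarge : ∀ i, 2 * k < (A i).card := fun i => by
    have := hn i
    rw [hAcard]
    lia
  have hBne : ∀ i, ∃ y ∈ B i, y ≠ 0 := fun i => by
    have := hn i
    obtain ⟨y, hy⟩ := Finset.card_pos.1 (show 0 < (B i).card by rw [hBcard]; lia)
    exact ⟨y, hy, (hB i y hy).ne'⟩
  obtain ⟨R, hR⟩ := exists_choose_mul_card_le_totalFaces (A := A) (B := B) hk hw
  rw [hAcard, hBcard] at hR
  refine ⟨pushedLayer (2 * k) w A B a b R, fun i => finite_layer,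
    fun i x hx => apply_zero_of_mem_layer hx, fun i => ?_, fun i => ?_, ?_⟩
  · exact adim_convexHull_layer (by lia) (hAlarge i) (hBne i)
  · rw [pushedLayer, extremePoints_convexHull_layer (by lia) (hA i) (hB i),
      ncard_layer (by lia) (hB i), hAcard, hBcard]
    lia
  · exact (mul_pow_le_choose_mul ((Nat.le_add_right _ 2).trans (hn a))).trans
      (Nat.mul_le_mul_left _ hR)

theorem stmt1 (d m : ℕ) (hd : 3 ≤ d) (hodd : Odd d) (hm : 2 ≤ m) :
    ∃ c : ℝ, 0 < c ∧ ∃ n₀ : ℕ,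
      ∀ n : Fin m → ℕ, (∀ i, n₀ ≤ n i) →
        ∃ (u : EuclideanSpace ℝ (Fin (d + 1))) (t : Fin m → ℝ)
          (P : Fin m → Set (EuclideanSpace ℝ (Fin (d + 1)))),
          ‖u‖ = 1 ∧ StrictMono t ∧
          (∀ i, (P i).Finite) ∧
          (∀ i, P i ⊆ {x | ⟪x, u⟫ = t i}) ∧
          (∀ i, adim (convexHull ℝ (P i)) = d) ∧
          (∀ i, ((convexHull ℝ (P i)).extremePoints ℝ).ncard = n i) ∧
          c * ∑ i : Fin m, ∑ j : Fin m,
              (if i ≠ j then (n i : ℝ) * (n j : ℝ) ^ (d / 2) else 0) ≤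
            (totalFaces (convexHull ℝ (⋃ i, P i)) : ℝ) := by
  obtain ⟨k, rfl⟩ := hodd
  have : Nontrivial (Fin m) := Fin.nontrivial_iff_two_le.2 hm
  have : 0 < m := by lia
  refine ⟨((m : ℝ) ^ 2 * (2 * 4 ^ k * k.factorial))⁻¹, by positivity, 4 * k + 2, fun n hn => ?_⟩
  obtain ⟨b, a, hba, hsum⟩ := exists_sum_sum_ne_le
    (f := fun i j => (n i : ℝ) * (n j : ℝ) ^ k) fun i j => by positivity
  have hheights : ((a : ℕ) : ℝ) ≠ ((b : ℕ) : ℝ) :=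
    Nat.cast_injective.ne (Fin.val_ne_of_ne hba.symm)
  obtain ⟨P, hfin, hheight, hdim, hvert, hfaces⟩ :=
    exists_polytopes_mul_pow_le_totalFaces (k := k) (w := fun i : Fin m => ((i : ℕ) : ℝ))
      (by lia) hheights hn
  refine ⟨EuclideanSpace.single 0 1, fun i => i, P, by simp, fun i j hij => Nat.cast_lt.2 hij,
    hfin, fun i x hx => ?_, hdim, hvert, ?_⟩
  · simpa [EuclideanSpace.inner_single_right] using hheight i x hx
  · rw [show (2 * k + 1) / 2 = k by lia, inv_mul_le_iff₀ (by positivity), mul_assoc]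
    rw [Fintype.card_fin] at hsum
    exact hsum.trans (mul_le_mul_of_nonneg_left (mod_cast hfaces) (sq_nonneg _))
end
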